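/- arXiv:2003.06457 — 10 statements merged into one kernel-verified Lean document; each statement's English description precedes it below -/
import Mathlib

section
/- Let Ω be a nonempty set, X a set, S a linear subspace of the real vector space of functions Ω → ℝ (with pointwise operations) containing the constant function 1, and T : S → ℝ a linear map that is signature-preserving (T(ζ) ≥ 0 whenever ζ ∈ S satisfies ζ(ω) ≥ 0 for all ω ∈ Ω). Let η, ξ : Ω → X and f : X → ℝ be such that f∘η, f∘ξ, their pointwise squares f²∘η, f²∘ξ, and the pointwise product (f∘η)·(f∘ξ) all belong to S. Let a, b ∈ ℝ with a ≠ 0 and a + b > 0, and suppose f(ξ(ω)) − f(η(ω)) ≤ b for all ω ∈ Ω and f(ξ(ω)) + f(η(ω)) ≤ a for all ω ∈ Ω. Set c = (2/a)·T(f∘η), C₁ = (T(1) − c)·b + T(f∘η) − T(f∘ξ), and C₂ = (T(1) − c)·b² + T(f²∘η) − T(f²∘ξ). Then C₂ ≥ 0 implies C₁ ≥ 0. -/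
/-!
Write `u = f ∘ ξ` and `v = f ∘ η`. The two bounds make both factors of
`(b - (u - v)) * (a - (u + v))` nonnegative. On expansion the cross terms `u * v` cancel, so the
product is a linear combination of `1`, `u`, `v`, `u ^ 2` and `v ^ 2`, and its image under `T` is
`(a + b) C₁ - C₂`. Positivity of `T` thus yields `C₂ ≤ (a + b) C₁`.
-/

section Hlawka

variable {K A E : Type*} [Field K] [CommRing A] [Algebra K A] [AddCommGroup E] [Module K E]
  {S : Submodule K A} {u v : A}

/-- The Hlawka one-form `C₁`, for a vector-valued linear map `T` on a subspace `S` of a commutative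
algebra. In the setting of functions `Ω → ℝ`, `v` is `f ∘ η` and `u` is `f ∘ ξ`. -/
def hlawkaOneForm (T : S →ₗ[K] E) (h1 : 1 ∈ S) (hv : v ∈ S) (hu : u ∈ S) (a b : K) : E :=
  b • (T ⟨1, h1⟩ - (2 / a) • T ⟨v, hv⟩) + T ⟨v, hv⟩ - T ⟨u, hu⟩

/-- The Hlawka two-form `C₂`, with the same conventions as `hlawkaOneForm`. -/
def hlawkaTwoForm (T : S →ₗ[K] E) (h1 : 1 ∈ S) (hv : v ∈ S) (hv2 : v ^ 2 ∈ S) (hu2 : u ^ 2 ∈ S)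
    (a b : K) : E :=
  b ^ 2 • (T ⟨1, h1⟩ - (2 / a) • T ⟨v, hv⟩) + T ⟨v ^ 2, hv2⟩ - T ⟨u ^ 2, hu2⟩

theorem smul_one_sub_sub_mul_smul_one_sub_add (a b : K) (u v : A) :
    (b • 1 - (u - v)) * (a • 1 - (u + v)) =
      (a * b) • 1 - (a + b) • u + (a - b) • v + u ^ 2 - v ^ 2 := by
  simp only [Algebra.smul_def, map_mul, map_add, map_sub]
  ring

theorem smul_one_sub_sub_mul_smul_one_sub_add_mem (h1 : 1 ∈ S) (hv : v ∈ S) (hu : u ∈ S)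
    (hv2 : v ^ 2 ∈ S) (hu2 : u ^ 2 ∈ S) (a b : K) :
    (b • 1 - (u - v)) * (a • 1 - (u + v)) ∈ S := by
  rw [smul_one_sub_sub_mul_smul_one_sub_add]
  exact S.sub_mem (S.add_mem (S.add_mem (S.sub_mem (S.smul_mem _ h1) (S.smul_mem _ hu))
    (S.smul_mem _ hv)) hu2) hv2

theorem add_smul_hlawkaOneForm_sub_hlawkaTwoForm (T : S →ₗ[K] E) (h1 : 1 ∈ S) (hv : v ∈ S)
    (hu : u ∈ S) (hv2 : v ^ 2 ∈ S) (hu2 : u ^ 2 ∈ S) {a : K} (ha : a ≠ 0) (b : K) :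
    (a + b) • hlawkaOneForm T h1 hv hu a b - hlawkaTwoForm T h1 hv hv2 hu2 a b =
      T ⟨(b • 1 - (u - v)) * (a • 1 - (u + v)),
        smul_one_sub_sub_mul_smul_one_sub_add_mem h1 hv hu hv2 hu2 a b⟩ := by
  have expand : (⟨(b • 1 - (u - v)) * (a • 1 - (u + v)),
      smul_one_sub_sub_mul_smul_one_sub_add_mem h1 hv hu hv2 hu2 a b⟩ : S) =
      (a * b) • ⟨1, h1⟩ - (a + b) • ⟨u, hu⟩ + (a - b) • ⟨v, hv⟩ + ⟨u ^ 2, hu2⟩ - ⟨v ^ 2, hv2⟩ :=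
    Subtype.ext (smul_one_sub_sub_mul_smul_one_sub_add a b u v)
  simp only [expand, map_add, map_sub, map_smul, hlawkaOneForm, hlawkaTwoForm]
  match_scalars <;> field_simp <;> ring

variable [PartialOrder A] [IsOrderedRing A] [PartialOrder E] [IsOrderedAddMonoid E]

theorem hlawkaTwoForm_le_add_smul_hlawkaOneForm (T : S →ₗ[K] E)
    (hT : ∀ ζ : S, 0 ≤ (ζ : A) → 0 ≤ T ζ) (h1 : 1 ∈ S) (hv : v ∈ S) (hu : u ∈ S)
    (hv2 : v ^ 2 ∈ S) (hu2 : u ^ 2 ∈ S) {a b : K} (ha : a ≠ 0)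
    (hdiff : u - v ≤ b • 1) (hsum : u + v ≤ a • 1) :
    hlawkaTwoForm T h1 hv hv2 hu2 a b ≤ (a + b) • hlawkaOneForm T h1 hv hu a b := by
  rw [← sub_nonneg, add_smul_hlawkaOneForm_sub_hlawkaTwoForm T h1 hv hu hv2 hu2 ha b]
  exact hT _ (mul_nonneg (sub_nonneg.2 hdiff) (sub_nonneg.2 hsum))

theorem hlawka_form_I_forward_general [PartialOrder K] [PosSMulReflectLE K E]
    (T : S →ₗ[K] E) (hT : ∀ ζ : S, 0 ≤ (ζ : A) → 0 ≤ T ζ) (h1 : 1 ∈ S) (hv : v ∈ S) (hu : u ∈ S)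
    (hv2 : v ^ 2 ∈ S) (hu2 : u ^ 2 ∈ S) {a b : K} (ha : a ≠ 0) (hab : 0 < a + b)
    (hdiff : u - v ≤ b • 1) (hsum : u + v ≤ a • 1)
    (hC₂ : 0 ≤ hlawkaTwoForm T h1 hv hv2 hu2 a b) :
    0 ≤ hlawkaOneForm T h1 hv hu a b :=
  nonneg_of_smul_nonneg_of_pos_left
    (hC₂.trans (hlawkaTwoForm_le_add_smul_hlawkaOneForm T hT h1 hv hu hv2 hu2 ha hdiff hsum)) hab

end Hlawka

theorem hlawka_form_I_forward {Ω X : Type*} [Nonempty Ω]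
    (S : Submodule ℝ (Ω → ℝ)) (h1 : (1 : Ω → ℝ) ∈ S)
    (T : S →ₗ[ℝ] ℝ)
    (hT : ∀ ζ : S, (∀ ω : Ω, 0 ≤ (ζ : Ω → ℝ) ω) → 0 ≤ T ζ)
    (η ξ : Ω → X) (f : X → ℝ)
    (hfη : (fun ω => f (η ω)) ∈ S) (hfξ : (fun ω => f (ξ ω)) ∈ S)
    (hfη2 : (fun ω => (f (η ω)) ^ 2) ∈ S) (hfξ2 : (fun ω => (f (ξ ω)) ^ 2) ∈ S)
    (hprod : (fun ω => f (η ω) * f (ξ ω)) ∈ S)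
    (a b : ℝ) (ha : a ≠ 0) (hab : 0 < a + b)
    (hdiff : ∀ ω : Ω, f (ξ ω) - f (η ω) ≤ b)
    (hsum : ∀ ω : Ω, f (ξ ω) + f (η ω) ≤ a) :
    0 ≤ (T ⟨1, h1⟩ - (2 / a) * T ⟨fun ω => f (η ω), hfη⟩) * b ^ 2
        + T ⟨fun ω => (f (η ω)) ^ 2, hfη2⟩ - T ⟨fun ω => (f (ξ ω)) ^ 2, hfξ2⟩ →
    0 ≤ (T ⟨1, h1⟩ - (2 / a) * T ⟨fun ω => f (η ω), hfη⟩) * b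
        + T ⟨fun ω => f (η ω), hfη⟩ - T ⟨fun ω => f (ξ ω), hfξ⟩ := by
  rw [mul_comm _ (b ^ 2), mul_comm _ b]
  exact hlawka_form_I_forward_general T hT h1 hfη hfξ hfη2 hfξ2 ha hab
    (fun ω => by simpa using hdiff ω) (fun ω => by simpa using hsum ω)
end

section
/- Let Ω be a nonempty set, X a set, S a linear subspace of the real vector space of functions Ω → ℝ (with pointwise operations) containing the constant function 1, and T : S → ℝ a linear map that is signature-preserving (T(ζ) ≥ 0 whenever ζ ∈ S satisfies ζ(ω) ≥ 0 for all ω ∈ Ω). Let η, ξ : Ω → X and f : X → ℝ be such that f∘η, f∘ξ, their pointwise squares f²∘η, f²∘ξ, and the pointwise product (f∘η)·(f∘ξ) all belong to S. Let a, b ∈ ℝ with a ≠ 0 and a + b > 0, and suppose f(ξ(ω)) − f(η(ω)) ≤ b for all ω ∈ Ω and f(ξ(ω)) + f(η(ω)) ≤ a for all ω ∈ Ω. Set c = (2/a)·T(f∘η), C₁ = (T(1) − c)·b + T(f∘η) − T(f∘ξ), and C₂ = (T(1) − c)·b² + T(f²∘η) − T(f²∘ξ). Then C₁ ≤ 0 implies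 C₂ ≤ 0. -/
/-!
Put `x = f ∘ ξ` and `y = f ∘ η`. The product `(b - (x - y)) * (a - (x + y))` is nonnegative, and
its mixed terms `x * y` cancel, so it is a linear combination of `1`, `x`, `y`, `x ^ 2` and `y ^ 2`.
Applying `T` to it and using `a * c = 2 * T y` gives the identity
`(a + b) * C₁ - C₂ = T ((b - (x - y)) * (a - (x + y)))`, hence `C₂ ≤ (a + b) * C₁`.
-/

section HlawkaForm

variable {R A M : Type*} [CommRing R] [CommRing A] [Algebra R A] [AddCommGroup M] [Module R M]
  {S : Submodule R A}

/-- The common shape of the Hlawka forms of a linear map `T`. With `c = (2 / a) T(y)`, the one-form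
`C₁` is `hlawkaForm T h1 c b y x` and the two-form `C₂` is
`hlawkaForm T h1 c (b ^ 2) (y ^ 2) (x ^ 2)`. The value `c` is a parameter, so that no division by
`a` is needed. -/
def hlawkaForm (T : S →ₗ[R] M) (h1 : 1 ∈ S) (c : M) (b : R) (y x : S) : M :=
  b • (T ⟨1, h1⟩ - c) + T y - T x

theorem algebraMap_sub_sub_mul_algebraMap_sub_add (a b : R) (x y : A) :
    (algebraMap R A b - (x - y)) * (algebraMap R A a - (x + y)) =
      (a * b) • 1 - (a + b) • x + (a - b) • y + x ^ 2 - y ^ 2 := by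
  simp only [Algebra.smul_def, map_mul, map_add, map_sub]
  ring

theorem algebraMap_sub_sub_mul_algebraMap_sub_add_mem (h1 : 1 ∈ S) {x y : A} (hy : y ∈ S)
    (hx : x ∈ S) (hy2 : y ^ 2 ∈ S) (hx2 : x ^ 2 ∈ S) (a b : R) :
    (algebraMap R A b - (x - y)) * (algebraMap R A a - (x + y)) ∈ S := by
  rw [algebraMap_sub_sub_mul_algebraMap_sub_add]
  exact S.sub_mem (S.add_mem (S.add_mem (S.sub_mem (S.smul_mem _ h1) (S.smul_mem _ hx))
    (S.smul_mem _ hy)) hx2) hy2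

theorem add_smul_hlawkaForm_sub_hlawkaForm_sq (T : S →ₗ[R] M) (h1 : 1 ∈ S) {x y : A} (hy : y ∈ S)
    (hx : x ∈ S) (hy2 : y ^ 2 ∈ S) (hx2 : x ^ 2 ∈ S) {a b : R} {c : M}
    (hc : a • c = (2 : R) • T ⟨y, hy⟩) :
    (a + b) • hlawkaForm T h1 c b ⟨y, hy⟩ ⟨x, hx⟩ -
        hlawkaForm T h1 c (b ^ 2) ⟨y ^ 2, hy2⟩ ⟨x ^ 2, hx2⟩ =
      T ⟨(algebraMap R A b - (x - y)) * (algebraMap R A a - (x + y)),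
        algebraMap_sub_sub_mul_algebraMap_sub_add_mem h1 hy hx hy2 hx2 a b⟩ := by
  have hprod : (⟨(algebraMap R A b - (x - y)) * (algebraMap R A a - (x + y)),
      algebraMap_sub_sub_mul_algebraMap_sub_add_mem h1 hy hx hy2 hx2 a b⟩ : S) =
      (a * b) • ⟨1, h1⟩ - (a + b) • ⟨x, hx⟩ + (a - b) • ⟨y, hy⟩ + ⟨x ^ 2, hx2⟩ - ⟨y ^ 2, hy2⟩ :=
    Subtype.ext (algebraMap_sub_sub_mul_algebraMap_sub_add a b x y)
  simp only [hprod, hlawkaForm, map_add, map_sub, map_smul]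
  linear_combination (norm := module) (-b) • hc

variable [PartialOrder A] [IsOrderedRing A] [PartialOrder M] [IsOrderedAddMonoid M]

theorem hlawkaForm_sq_le_add_smul_hlawkaForm (T : S →ₗ[R] M)
    (hT : ∀ z : S, 0 ≤ (z : A) → 0 ≤ T z) (h1 : 1 ∈ S) {x y : A} (hy : y ∈ S) (hx : x ∈ S)
    (hy2 : y ^ 2 ∈ S) (hx2 : x ^ 2 ∈ S) {a b : R} {c : M} (hc : a • c = (2 : R) • T ⟨y, hy⟩)
    (hdiff : x - y ≤ algebraMap R A b) (hsum : x + y ≤ algebraMap R A a) :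
    hlawkaForm T h1 c (b ^ 2) ⟨y ^ 2, hy2⟩ ⟨x ^ 2, hx2⟩ ≤
      (a + b) • hlawkaForm T h1 c b ⟨y, hy⟩ ⟨x, hx⟩ := by
  rw [← sub_nonneg, add_smul_hlawkaForm_sub_hlawkaForm_sq T h1 hy hx hy2 hx2 hc]
  exact hT _ (mul_nonneg (sub_nonneg.2 hdiff) (sub_nonneg.2 hsum))

theorem hlawka_form_I_backward_general [Preorder R] [PosSMulMono R M] (T : S →ₗ[R] M)
    (hT : ∀ z : S, 0 ≤ (z : A) → 0 ≤ T z) (h1 : 1 ∈ S) {x y : A} (hy : y ∈ S) (hx : x ∈ S)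
    (hy2 : y ^ 2 ∈ S) (hx2 : x ^ 2 ∈ S) {a b : R} {c : M} (hc : a • c = (2 : R) • T ⟨y, hy⟩)
    (hab : 0 ≤ a + b) (hdiff : x - y ≤ algebraMap R A b) (hsum : x + y ≤ algebraMap R A a)
    (hC₁ : hlawkaForm T h1 c b ⟨y, hy⟩ ⟨x, hx⟩ ≤ 0) :
    hlawkaForm T h1 c (b ^ 2) ⟨y ^ 2, hy2⟩ ⟨x ^ 2, hx2⟩ ≤ 0 :=
  (hlawkaForm_sq_le_add_smul_hlawkaForm T hT h1 hy hx hy2 hx2 hc hdiff hsum).trans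
    (smul_nonpos_of_nonneg_of_nonpos hab hC₁)

end HlawkaForm

theorem hlawka_form_I_backward {Ω X : Type*} [Nonempty Ω]
    (S : Submodule ℝ (Ω → ℝ)) (h1 : (1 : Ω → ℝ) ∈ S)
    (T : S →ₗ[ℝ] ℝ)
    (hT : ∀ ζ : S, (∀ ω : Ω, 0 ≤ (ζ : Ω → ℝ) ω) → 0 ≤ T ζ)
    (η ξ : Ω → X) (f : X → ℝ)
    (hfη : (fun ω => f (η ω)) ∈ S) (hfξ : (fun ω => f (ξ ω)) ∈ S)
    (hfη2 : (fun ω => (f (η ω)) ^ 2) ∈ S) (hfξ2 : (fun ω => (f (ξ ω)) ^ 2) ∈ S)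
    (hprod : (fun ω => f (η ω) * f (ξ ω)) ∈ S)
    (a b : ℝ) (ha : a ≠ 0) (hab : 0 < a + b)
    (hdiff : ∀ ω : Ω, f (ξ ω) - f (η ω) ≤ b)
    (hsum : ∀ ω : Ω, f (ξ ω) + f (η ω) ≤ a) :
    (T ⟨1, h1⟩ - (2 / a) * T ⟨fun ω => f (η ω), hfη⟩) * b + T ⟨fun ω => f (η ω), hfη⟩ - T ⟨fun ω => f (ξ ω), hfξ⟩ ≤ 0 → (T ⟨1, h1⟩ - (2 / a) * T ⟨fun ω => f (η ω), hfη⟩) * b ^ 2 + T ⟨fun ω => (f (η ω)) ^ 2, hfη2⟩ - T ⟨fun ω => (f (ξ ω)) ^ 2, hfξ2⟩ ≤ 0 := by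
  rw [mul_comm _ b, mul_comm _ (b ^ 2)]
  exact hlawka_form_I_backward_general T hT h1 hfη hfξ hfη2 hfξ2
    (by simp only [smul_eq_mul]; field_simp) hab.le hdiff hsum
end

section
/- Let G be an abelian (additive) semigroup and F : G → ℝ a nonnegative function that is strongly subadditive, i.e. F(x) + F(y) ≥ F(x+y) and F(x) + F(x+y) ≥ F(y) for all x, y ∈ G. For an integer k, say that H(k) holds if for all x, y, z ∈ G: F(x+y)^(1/2^k) + F(y+z)^(1/2^k) + F(z+x)^(1/2^k) ≤ F(x)^(1/2^k) + F(y)^(1/2^k) + F(z)^(1/2^k) + F(x+y+z)^(1/2^k). If H(k₀) holds for some integer k₀ ≥ −1, then H(k) holds for every integer k ≥ k₀. -/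
/-!
Put `S = F x + F y + F z + F (x + y + z)` and `U = F (x + y) + F (y + z) + F (z + x)`, and let `D`
be the same difference `S - U` formed with `F ^ 2` in place of `F`. Hlawka's identity writes
`S * (S - U)` as `D` plus `(F x + F y - F (x + y)) * (F z + F (x + y + z) - F (x + y))` and its two
cyclic permutations, whose factors are all nonnegative when `F` is strongly subadditive. So Hlawka's
inequality passes from `F ^ 2` to `F`. Since `t ↦ t ^ p` is monotone and subadditive for
`0 ≤ p ≤ 1`, this applies to `F ^ (p / 2)` whenever `0 ≤ p ≤ 2`, and the exponent can be halved
repeatedly.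
-/

section Definitions

variable {G R : Type*} [Add G] [Add R] [LE R]

/-- Strong subadditivity of `F`: subadditivity together with the inequality `F y ≤ F x + F (x + y)`
satisfied by a seminorm, stated without negatives so that it makes sense on a semigroup. -/
structure StronglySubadditive (F : G → R) : Prop where
  map_add_le (x y : G) : F (x + y) ≤ F x + F y
  le_map_add (x y : G) : F y ≤ F x + F (x + y)

/-- Hlawka's inequality for `F`. The property `H(k)` of the paper is
`SatisfiesHlawka fun x ↦ F x ^ (1 / 2 ^ k)`. -/
def SatisfiesHlawka (F : G → R) : Prop :=
  ∀ x y z, F (x + y) + F (y + z) + F (z + x) ≤ F x + F y + F z + F (x + y + z)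

end Definitions

section OrderedRing

variable {G R : Type*} [CommRing R] [LinearOrder R] [IsStrictOrderedRing R] {F : G → R}

theorem StronglySubadditive.nonneg [Add G] (hF : StronglySubadditive F) (x : G) : 0 ≤ F x := by
  linarith [hF.map_add_le x x, hF.le_map_add x x]

theorem add_add_le_of_sq_add_sq_add_sq_le {a b c s u v w : R}
    (hu : u ≤ a + b) (hv : v ≤ b + c) (hw : w ≤ c + a)
    (hu' : u ≤ c + s) (hv' : v ≤ a + s) (hw' : w ≤ b + s)
    (hsq : u ^ 2 + v ^ 2 + w ^ 2 ≤ a ^ 2 + b ^ 2 + c ^ 2 + s ^ 2) :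
    u + v + w ≤ a + b + c + s := by
  rcases le_or_gt (a + b + c + s) 0 with hS | hS
  · linarith
  have hlawka_identity : (a + b + c + s) * (a + b + c + s - (u + v + w)) =
      (a ^ 2 + b ^ 2 + c ^ 2 + s ^ 2 - (u ^ 2 + v ^ 2 + w ^ 2)) + (a + b - u) * (c + s - u) +
        (b + c - v) * (a + s - v) + (c + a - w) * (b + s - w) := by
    ring
  rw [← sub_nonneg] at hu hv hw hu' hv' hw' hsq
  refine sub_nonneg.mp (nonneg_of_mul_nonneg_right ?_ hS)
  rw [hlawka_identity]
  positivity

theorem StronglySubadditive.satisfiesHlawka_of_sq [AddCommSemigroup G]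
    (hF : StronglySubadditive F) (hsq : SatisfiesHlawka fun x ↦ F x ^ 2) : SatisfiesHlawka F := by
  intro x y z
  have hxy : F (x + y) ≤ F z + F (x + y + z) := by
    simpa only [add_comm z] using hF.le_map_add z (x + y)
  have hyz : F (y + z) ≤ F x + F (x + y + z) := by
    simpa only [add_assoc] using hF.le_map_add x (y + z)
  have hzx : F (z + x) ≤ F y + F (x + y + z) := by
    simpa only [add_comm, add_left_comm] using hF.le_map_add y (z + x)
  exact add_add_le_of_sq_add_sq_add_sq_le (hF.map_add_le x y) (hF.map_add_le y z)
    (hF.map_add_le z x) hxy hyz hzx (hsq x y z)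

end OrderedRing

section Rpow

variable {G : Type*} {F : G → ℝ} {p : ℝ}

theorem StronglySubadditive.rpow [Add G] (hF : StronglySubadditive F) (hp₀ : 0 ≤ p)
    (hp₁ : p ≤ 1) : StronglySubadditive fun x ↦ F x ^ p := by
  have rpow_le_add {x y z : G} (h : F z ≤ F x + F y) : F z ^ p ≤ F x ^ p + F y ^ p :=
    (Real.rpow_le_rpow (hF.nonneg z) h hp₀).trans
      (Real.rpow_add_le_add_rpow (hF.nonneg x) (hF.nonneg y) hp₀ hp₁)
  exact ⟨fun x y ↦ rpow_le_add (hF.map_add_le x y), fun x y ↦ rpow_le_add (hF.le_map_add x y)⟩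

theorem StronglySubadditive.satisfiesHlawka_rpow_half [AddCommSemigroup G]
    (hF : StronglySubadditive F) (hp₀ : 0 ≤ p) (hp₂ : p ≤ 2)
    (hH : SatisfiesHlawka fun x ↦ F x ^ p) : SatisfiesHlawka fun x ↦ F x ^ (p / 2) := by
  have sq_rpow_half (x : G) : (F x ^ (p / 2)) ^ 2 = F x ^ p := by
    rw [← Real.rpow_mul_natCast (hF.nonneg x), Nat.cast_ofNat, div_mul_cancel₀ p two_ne_zero]
  refine (hF.rpow (by linarith) (by linarith)).satisfiesHlawka_of_sq ?_
  simpa only [sq_rpow_half] using hH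

theorem hlawka_power_strong_subadditive_general [AddCommSemigroup G]
    (hF : StronglySubadditive F) (hp₀ : 0 ≤ p) (hp₂ : p ≤ 2)
    (hH : SatisfiesHlawka fun x ↦ F x ^ p) (n : ℕ) :
    SatisfiesHlawka fun x ↦ F x ^ (p / 2 ^ n) := by
  induction n with
  | zero => simpa only [pow_zero, div_one] using hH
  | succ n ih =>
    have hpn : p / 2 ^ n ≤ 2 := (div_le_self hp₀ (one_le_pow₀ one_le_two)).trans hp₂
    simpa only [div_div, ← pow_succ] using
      hF.satisfiesHlawka_rpow_half (by positivity) hpn ih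

end Rpow

theorem one_div_two_zpow_le_two {k : ℤ} (hk : -1 ≤ k) : 1 / (2 : ℝ) ^ k ≤ 2 := by
  rw [one_div, ← zpow_neg]
  exact (zpow_le_zpow_right₀ one_le_two (by lia)).trans_eq (zpow_one 2)

theorem hlawka_power_strong_subadditive {G : Type*} [AddCommSemigroup G]
    (F : G → ℝ) (hF0 : ∀ x : G, 0 ≤ F x)
    (hsub : ∀ x y : G, F (x + y) ≤ F x + F y)
    (hsub' : ∀ x y : G, F y ≤ F x + F (x + y))
    (k₀ : ℤ) (hk₀ : -1 ≤ k₀)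
    (hH : ∀ x y z : G,
      F (x + y) ^ (1 / (2 : ℝ) ^ k₀) + F (y + z) ^ (1 / (2 : ℝ) ^ k₀)
          + F (z + x) ^ (1 / (2 : ℝ) ^ k₀)
        ≤ F x ^ (1 / (2 : ℝ) ^ k₀) + F y ^ (1 / (2 : ℝ) ^ k₀)
          + F z ^ (1 / (2 : ℝ) ^ k₀) + F (x + y + z) ^ (1 / (2 : ℝ) ^ k₀)) :
    ∀ k : ℤ, k₀ ≤ k → ∀ x y z : G,
      F (x + y) ^ (1 / (2 : ℝ) ^ k) + F (y + z) ^ (1 / (2 : ℝ) ^ k)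
          + F (z + x) ^ (1 / (2 : ℝ) ^ k)
        ≤ F x ^ (1 / (2 : ℝ) ^ k) + F y ^ (1 / (2 : ℝ) ^ k)
          + F z ^ (1 / (2 : ℝ) ^ k) + F (x + y + z) ^ (1 / (2 : ℝ) ^ k) := by
  intro k hk
  obtain ⟨n, rfl⟩ := Int.le.dest hk
  simpa only [SatisfiesHlawka, div_div, ← zpow_natCast, ← zpow_add₀ (two_ne_zero' ℝ)] using
    hlawka_power_strong_subadditive_general ⟨hsub, hsub'⟩ (by positivity)
      (one_div_two_zpow_le_two hk₀) hH n
end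

section
/- Let (Ω, Σ, μ) be a measure space with μ a finite measure, let A, B, C ∈ Σ be measurable sets, and let k ≥ 0 be a natural number. Then μ(A)^(1/2^k) + μ(B)^(1/2^k) + μ(C)^(1/2^k) + μ(A ∪ B ∪ C)^(1/2^k) ≥ μ(A ∪ B)^(1/2^k) + μ(B ∪ C)^(1/2^k) + μ(C ∪ A)^(1/2^k), where measures are taken as real numbers. -/
open MeasureTheory

/-!
The inequality holds for every exponent `p ∈ [0, 1]`, and more generally for every concave `f` on
`[0, ∞)` all of whose increments `t ↦ f (t + a) - f t` are convex. For such `f` the defect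
`f (x + a) + f (x + b) - f x - f (x + a + b)` is nonnegative, increases with the steps `a`, `b` and
decreases with the base point `x`. With `x = μ (A ∩ B)`, `a = μ (A \ B)` and `b = μ (B \ A)` it is
the defect of modularity of `f ∘ μ` on `A` and `B`. Replacing `A` and `B` by `A ∪ C` and `B ∪ C`
raises the base point and shrinks the steps, so the defect decreases; adding the nonnegative defect
of `A ∩ B` and `C` gives an inequality that even has room for the term `f (μ (A ∩ B ∩ C))`.
-/

section ConcavityDefect

/-- The mixed second difference of `f` at base point `x` with steps `a` and `b`, signed so that it
is nonnegative when `f` is concave. It measures how far `f` is from being affine. -/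
def concavityDefect {G H : Type*} [Add G] [AddGroup H] (f : G → H) (x a b : G) : H :=
  f (x + a) + f (x + b) - f x - f (x + a + b)

lemma concavityDefect_comm {G H : Type*} [AddCommSemigroup G] [AddCommGroup H] (f : G → H)
    (x a b : G) : concavityDefect f x a b = concavityDefect f x b a := by
  simp only [concavityDefect, add_right_comm x b a, add_comm (f (x + b))]

variable {𝕜 : Type*} [Field 𝕜] [LinearOrder 𝕜] [IsStrictOrderedRing 𝕜] {f : 𝕜 → 𝕜} {s : Set 𝕜}
  {x y a a' b b' : 𝕜}

lemma mul_add_mul_le_of_concaveOn (hf : ConcaveOn 𝕜 s f) (hx : x ∈ s) (hxab : x + a + b ∈ s)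
    (ha : 0 ≤ a) (hb : 0 ≤ b) : b * f x + a * f (x + a + b) ≤ (a + b) * f (x + a) := by
  rcases (add_nonneg ha hb).eq_or_lt with hab | hab
  · obtain ⟨rfl, rfl⟩ := (add_eq_zero_iff_of_nonneg ha hb).1 hab.symm
    simp
  have hbarycenter : (b / (a + b)) • x + (a / (a + b)) • (x + a + b) = x + a := by
    simp only [smul_eq_mul]
    field_simp
    ring
  have hweights : b / (a + b) + a / (a + b) = 1 := by
    rw [← add_div, add_comm b a, div_self hab.ne']
  have h := hf.2 hx hxab (by positivity) (by positivity) hweights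
  rw [hbarycenter, smul_eq_mul, smul_eq_mul, div_mul_eq_mul_div, div_mul_eq_mul_div, ← add_div,
    div_le_iff₀' hab] at h
  exact h

lemma concavityDefect_nonneg (hf : ConcaveOn 𝕜 s f) (hx : x ∈ s) (hxab : x + a + b ∈ s)
    (ha : 0 ≤ a) (hb : 0 ≤ b) : 0 ≤ concavityDefect f x a b := by
  rcases (add_nonneg ha hb).eq_or_lt with hab | hab
  · obtain ⟨rfl, rfl⟩ := (add_eq_zero_iff_of_nonneg ha hb).1 hab.symm
    simp [concavityDefect]
  have hxa := mul_add_mul_le_of_concaveOn hf hx hxab ha hb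
  have hxb := mul_add_mul_le_of_concaveOn hf hx (add_right_comm x a b ▸ hxab) hb ha
  rw [add_right_comm x b a] at hxb
  refine nonneg_of_mul_nonneg_right ?_ hab
  unfold concavityDefect
  linear_combination hxa + hxb

lemma concavityDefect_nonpos (hf : ConvexOn 𝕜 s f) (hx : x ∈ s) (hxab : x + a + b ∈ s)
    (ha : 0 ≤ a) (hb : 0 ≤ b) : concavityDefect f x a b ≤ 0 := by
  have h := concavityDefect_nonneg hf.neg hx hxab ha hb
  simp only [concavityDefect, Pi.neg_apply] at h ⊢
  linarith

lemma concavityDefect_le_of_step_le (hf : ConcaveOn 𝕜 s f) (hx : x + a ∈ s)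
    (hxab : x + a' + b ∈ s) (haa' : a ≤ a') (hb : 0 ≤ b) :
    concavityDefect f x a b ≤ concavityDefect f x a' b := by
  have h : 0 ≤ concavityDefect f (x + a) (a' - a) b :=
    concavityDefect_nonneg hf hx (by simpa using hxab) (sub_nonneg.2 haa') hb
  simp only [concavityDefect, add_add_sub_cancel] at h ⊢
  linarith

lemma concavityDefect_le_of_base_le (hf : ConvexOn 𝕜 s fun t => f (t + a) - f t)
    (hx : x ∈ s) (hyb : y + b ∈ s) (hxy : x ≤ y) (hb : 0 ≤ b) :
    concavityDefect f y a b ≤ concavityDefect f x a b := by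
  have h : concavityDefect (fun t => f (t + a) - f t) x (y - x) b ≤ 0 :=
    concavityDefect_nonpos hf hx (by simpa using hyb) (sub_nonneg.2 hxy) hb
  simp only [concavityDefect, add_sub_cancel, add_right_comm _ b a] at h ⊢
  linarith

lemma concavityDefect_le_concavityDefect (hf : ConcaveOn 𝕜 (Set.Ici 0) f)
    (hΔf : ∀ c, 0 ≤ c → ConvexOn 𝕜 (Set.Ici 0) fun t => f (t + c) - f t)
    (hx : 0 ≤ x) (hxy : x ≤ y) (ha : 0 ≤ a) (haa' : a ≤ a') (hb : 0 ≤ b) (hbb' : b ≤ b') :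
    concavityDefect f y a b ≤ concavityDefect f x a' b' := by
  have hy : 0 ≤ y := hx.trans hxy
  have ha' : 0 ≤ a' := ha.trans haa'
  have hb' : 0 ≤ b' := hb.trans hbb'
  calc concavityDefect f y a b
      ≤ concavityDefect f x a b :=
        concavityDefect_le_of_base_le (hΔf a ha) hx (add_nonneg hy hb) hxy hb
    _ ≤ concavityDefect f x a' b :=
        concavityDefect_le_of_step_le hf (add_nonneg hx ha)
          (add_nonneg (add_nonneg hx ha') hb) haa' hb
    _ = concavityDefect f x b a' := concavityDefect_comm f x a' b
    _ ≤ concavityDefect f x b' a' :=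
        concavityDefect_le_of_step_le hf (add_nonneg hx hb)
          (add_nonneg (add_nonneg hx hb') ha') hbb' ha'
    _ = concavityDefect f x a' b' := concavityDefect_comm f x b' a'

end ConcavityDefect

section Measure

variable {Ω : Type*} [MeasurableSpace Ω] {μ : Measure Ω} {A B C : Set Ω} {f : ℝ → ℝ}

lemma concavityDefect_measureReal (f : ℝ → ℝ) (hA : MeasurableSet A) (hB : MeasurableSet B)
    (hμA : μ A ≠ ⊤) (hμB : μ B ≠ ⊤) :
    concavityDefect f (μ.real (A ∩ B)) (μ.real (A \ B)) (μ.real (B \ A)) =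
      f (μ.real A) + f (μ.real B) - f (μ.real (A ∩ B)) - f (μ.real (A ∪ B)) := by
  have hAB : μ.real (A ∩ B) + μ.real (A \ B) = μ.real A := measureReal_inter_add_sdiff hB
  have hBA : μ.real (A ∩ B) + μ.real (B \ A) = μ.real B := by
    rw [Set.inter_comm, measureReal_inter_add_sdiff hA]
  have hunion : μ.real A + μ.real (B \ A) = μ.real (A ∪ B) := by
    linarith [measureReal_union_add_inter (μ := μ) (s := A) hB]
  rw [concavityDefect, hAB, hBA, hunion]

lemma concavityDefect_measureReal_union_right_le (hf : ConcaveOn ℝ (Set.Ici 0) f)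
    (hΔf : ∀ c, 0 ≤ c → ConvexOn ℝ (Set.Ici 0) fun t => f (t + c) - f t)
    (hμA : μ A ≠ ⊤) (hμB : μ B ≠ ⊤) (hμC : μ C ≠ ⊤) :
    concavityDefect f (μ.real ((A ∪ C) ∩ (B ∪ C))) (μ.real ((A ∪ C) \ (B ∪ C)))
        (μ.real ((B ∪ C) \ (A ∪ C))) ≤
      concavityDefect f (μ.real (A ∩ B)) (μ.real (A \ B)) (μ.real (B \ A)) := by
  have hinter : A ∩ B ⊆ (A ∪ C) ∩ (B ∪ C) :=
    Set.inter_subset_inter Set.subset_union_left Set.subset_union_left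
  have hsdiff {S T : Set Ω} (hμS : μ S ≠ ⊤) :
      μ.real ((S ∪ C) \ (T ∪ C)) ≤ μ.real (S \ T) :=
    measureReal_mono (by grind) (measure_ne_top_of_subset Set.sdiff_subset hμS)
  exact concavityDefect_le_concavityDefect hf hΔf measureReal_nonneg (measureReal_mono hinter)
    measureReal_nonneg (hsdiff hμA) measureReal_nonneg (hsdiff hμB)

theorem hlawka_comp_measureReal (hf : ConcaveOn ℝ (Set.Ici 0) f)
    (hΔf : ∀ c, 0 ≤ c → ConvexOn ℝ (Set.Ici 0) fun t => f (t + c) - f t)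
    (hA : MeasurableSet A) (hB : MeasurableSet B) (hC : MeasurableSet C)
    (hμA : μ A ≠ ⊤) (hμB : μ B ≠ ⊤) (hμC : μ C ≠ ⊤) :
    f (μ.real (A ∪ B)) + f (μ.real (B ∪ C)) + f (μ.real (C ∪ A)) + f (μ.real (A ∩ B ∩ C)) ≤
      f (μ.real A) + f (μ.real B) + f (μ.real C) + f (μ.real (A ∪ B ∪ C)) := by
  have hcompare := concavityDefect_measureReal_union_right_le hf hΔf hμA hμB hμC
  rw [concavityDefect_measureReal f hA hB hμA hμB,
    concavityDefect_measureReal f (hA.union hC) (hB.union hC) (by finiteness) (by finiteness),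
    ← Set.inter_union_distrib_right, ← Set.union_union_distrib_right, Set.union_comm A C]
    at hcompare
  have hnonneg : 0 ≤ concavityDefect f (μ.real ((A ∩ B) ∩ C)) (μ.real ((A ∩ B) \ C))
      (μ.real (C \ (A ∩ B))) :=
    concavityDefect_nonneg hf measureReal_nonneg
      (add_nonneg (add_nonneg measureReal_nonneg measureReal_nonneg) measureReal_nonneg)
      measureReal_nonneg measureReal_nonneg
  rw [concavityDefect_measureReal f (hA.inter hB) hC (by finiteness) hμC] at hnonneg
  linarith

end Measure

lemma convexOn_rpow_add_sub_rpow {p c : ℝ} (hp₀ : 0 ≤ p) (hp₁ : p ≤ 1) (hc : 0 ≤ c) :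
    ConvexOn ℝ (Set.Ici 0) fun t : ℝ => (t + c) ^ p - t ^ p := by
  have hderiv (q t : ℝ) (ht : 0 < t) :
      HasDerivAt (fun t : ℝ => (t + c) ^ q - t ^ q) (q * ((t + c) ^ (q - 1) - t ^ (q - 1))) t := by
    rw [mul_sub]
    exact ((Real.hasDerivAt_rpow_const (Or.inl (add_pos_of_pos_of_nonneg ht hc).ne')).comp_add_const
      t c).sub (Real.hasDerivAt_rpow_const (Or.inl ht.ne'))
  refine convexOn_of_hasDerivWithinAt2_nonneg (convex_Ici 0)
    (f' := fun t => p * ((t + c) ^ (p - 1) - t ^ (p - 1)))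
    (f'' := fun t => p * ((p - 1) * ((t + c) ^ (p - 1 - 1) - t ^ (p - 1 - 1)))) ?_ ?_ ?_ ?_
  · exact (((continuous_id.add_const c).rpow_const fun _ => Or.inr hp₀).sub
      (continuous_id.rpow_const fun _ => Or.inr hp₀)).continuousOn
  all_goals
    intro t ht
    rw [interior_Ici, Set.mem_Ioi] at ht
  · exact (hderiv p t ht).hasDerivWithinAt
  · exact ((hderiv (p - 1) t ht).const_mul p).hasDerivWithinAt
  · have hle : (t + c) ^ (p - 1 - 1) ≤ t ^ (p - 1 - 1) :=
      Real.rpow_le_rpow_of_nonpos ht (le_add_of_nonneg_right hc) (by linarith)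
    exact mul_nonneg hp₀ (mul_nonneg_of_nonpos_of_nonpos (by linarith) (by linarith))

theorem hlawka_measure_union_general {Ω : Type*} [MeasurableSpace Ω] {μ : Measure Ω}
    {A B C : Set Ω} (hA : μ A ≠ ⊤) (hB : μ B ≠ ⊤) (hC : μ C ≠ ⊤) {p : ℝ} (hp₀ : 0 ≤ p)
    (hp₁ : p ≤ 1) :
    μ.real (A ∪ B) ^ p + μ.real (B ∪ C) ^ p + μ.real (C ∪ A) ^ p + μ.real (A ∩ B ∩ C) ^ p ≤
      μ.real A ^ p + μ.real B ^ p + μ.real C ^ p + μ.real (A ∪ B ∪ C) ^ p := by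
  let hull := toMeasurable μ
  have hunion : μ (hull A ∪ hull B ∪ hull C) = μ (A ∪ B ∪ C) := by
    rw [measure_union_toMeasurable, Set.union_right_comm, measure_union_toMeasurable,
      Set.union_assoc, measure_toMeasurable_union, ← Set.union_assoc, Set.union_right_comm]
  have hhull : μ.real (A ∪ B) ^ p + μ.real (B ∪ C) ^ p + μ.real (C ∪ A) ^ p +
        μ.real (hull A ∩ hull B ∩ hull C) ^ p ≤
      μ.real A ^ p + μ.real B ^ p + μ.real C ^ p + μ.real (A ∪ B ∪ C) ^ p := by
    have h := hlawka_comp_measureReal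
      (Real.concaveOn_rpow hp₀ hp₁) (fun _ hc => convexOn_rpow_add_sub_rpow hp₀ hp₁ hc)
      (measurableSet_toMeasurable μ A) (measurableSet_toMeasurable μ B)
      (measurableSet_toMeasurable μ C) ((measure_toMeasurable A).trans_ne hA)
      ((measure_toMeasurable B).trans_ne hB) ((measure_toMeasurable C).trans_ne hC)
    simpa only [measureReal_def, hull, hunion, measure_toMeasurable, measure_toMeasurable_union,
      measure_union_toMeasurable] using h
  have hinter : μ.real (A ∩ B ∩ C) ≤ μ.real (hull A ∩ hull B ∩ hull C) := by
    refine measureReal_mono ?_ ?_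
    · exact Set.inter_subset_inter (Set.inter_subset_inter (subset_toMeasurable μ A)
        (subset_toMeasurable μ B)) (subset_toMeasurable μ C)
    · exact measure_ne_top_of_subset Set.inter_subset_right (by simpa [hull] using hC)
  linarith [Real.rpow_le_rpow measureReal_nonneg hinter hp₀]

theorem hlawka_measure_union {Ω : Type*} [MeasurableSpace Ω]
    (μ : Measure Ω) [IsFiniteMeasure μ]
    (A B C : Set Ω) (hA : MeasurableSet A) (hB : MeasurableSet B)
    (hC : MeasurableSet C) (k : ℕ) :
    (μ (A ∪ B)).toReal ^ (1 / (2 : ℝ) ^ k) + (μ (B ∪ C)).toReal ^ (1 / (2 : ℝ) ^ k)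
        + (μ (C ∪ A)).toReal ^ (1 / (2 : ℝ) ^ k)
      ≤ (μ A).toReal ^ (1 / (2 : ℝ) ^ k) + (μ B).toReal ^ (1 / (2 : ℝ) ^ k)
        + (μ C).toReal ^ (1 / (2 : ℝ) ^ k)
        + (μ (A ∪ B ∪ C)).toReal ^ (1 / (2 : ℝ) ^ k) := by
  have hexp : 1 / (2 : ℝ) ^ k ≤ 1 := div_le_one_of_le₀ (one_le_pow₀ one_le_two) (by positivity)
  exact (le_add_of_nonneg_right (Real.rpow_nonneg measureReal_nonneg _)).trans
    (hlawka_measure_union_general (μ := μ) (A := A) (B := B) (C := C)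
      (by finiteness) (by finiteness) (by finiteness) (by positivity) hexp)
end

section
/- Let (Ω, Σ, μ) be a measure space with μ a finite measure, let A, B, C ∈ Σ be measurable sets, let Δ denote symmetric difference of sets, and let k ≥ 0 be a natural number. Then μ(A)^(1/2^k) + μ(B)^(1/2^k) + μ(C)^(1/2^k) + μ(A Δ B Δ C)^(1/2^k) ≥ μ(A Δ B)^(1/2^k) + μ(B Δ C)^(1/2^k) + μ(C Δ A)^(1/2^k), where measures are taken as real numbers. -/
open MeasureTheory

/-!
For a family `A` of sets indexed by `ι`, let `m T` be the measure of the symmetric difference of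
the `A i` with `i ∈ T`. When `ι` has three elements, the inequality says that
`∑ T, (-1) ^ #T * m T ^ p ≤ 0`, i.e. that a nontrivial Fourier coefficient of `m ^ p` on the group
of subsets of `ι` is nonpositive; this holds for every finite nonempty `ι` and all `0 < p ≤ 1`.

Each cell `x` of the Venn diagram contributes to `exp (-s * m T)` a factor which is `1` or some
`q ∈ [0, 1]` according to the parity of `#(T ∩ x)`. Such a factor is a combination of two characters
with nonnegative coefficients, so all Fourier coefficients of `exp (-s * m)` are nonnegative. By
Laplace transform the same is true of `(t + m)⁻¹`. For `p < 1`, `m ^ p` is an integral over `t` of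
positive multiples of `t⁻¹ - (t + m)⁻¹`, where the constant `t⁻¹` has no nontrivial Fourier
coefficient; `m` itself is a constant minus a nonnegative combination of characters.
-/

open Finset
open scoped symmDiff

theorem prod_ite_neg_one_eq_ite_odd {ι R : Type*} [DecidableEq ι] [CommRing R]
    (T x : Finset ι) :
    (∏ i ∈ T, if i ∈ x then (-1 : R) else 1) = if Odd #(T ∩ x) then -1 else 1 := by
  rw [prod_ite_mem, prod_const, neg_one_pow_eq_ite]
  simp [← Nat.not_even_iff_odd]

section Fourier

variable {ι : Type*} [Fintype ι]

/-- Nonnegativity of the Fourier transform of `φ`, for the group `Finset ι` under `∆`: its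
characters are `T ↦ ∏ i ∈ T, c i` with signs `c i = ±1`. As the transform is affine in each `c i`,
it is equivalent, and more convenient, to let `c i` range over the interval `[-1, 1]`. -/
def FourierNonneg (φ : Finset ι → ℝ) : Prop :=
  ∀ c : ι → ℝ, (∀ i, |c i| ≤ 1) → 0 ≤ ∑ T, (∏ i ∈ T, c i) * φ T

namespace FourierNonneg

theorem one : FourierNonneg (1 : Finset ι → ℝ) := fun c hc ↦ by
  calc
    0 ≤ ∏ i, (1 + c i) := prod_nonneg fun i _ ↦ by linarith [(abs_le.1 (hc i)).1]
    _ = ∑ T, (∏ i ∈ T, c i) * (1 : Finset ι → ℝ) T := by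
      simp [prod_one_add]

theorem prod_mul {φ : Finset ι → ℝ} (hφ : FourierNonneg φ) {d : ι → ℝ} (hd : ∀ i, |d i| ≤ 1) :
    FourierNonneg fun T ↦ (∏ i ∈ T, d i) * φ T := fun c hc ↦ by
  have hcd (i : ι) : |(c * d) i| ≤ 1 := by
    simpa [abs_mul] using mul_le_one₀ (hc i) (abs_nonneg _) (hd i)
  simpa only [Pi.mul_apply, prod_mul_distrib, mul_assoc] using hφ (c * d) hcd

theorem const_mul {φ : Finset ι → ℝ} (hφ : FourierNonneg φ) {a : ℝ} (ha : 0 ≤ a) :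
    FourierNonneg fun T ↦ a * φ T := fun c hc ↦ by
  simpa only [mul_sum, mul_left_comm] using mul_nonneg ha (hφ c hc)

theorem add {φ ψ : Finset ι → ℝ} (hφ : FourierNonneg φ) (hψ : FourierNonneg ψ) :
    FourierNonneg fun T ↦ φ T + ψ T := fun c hc ↦ by
  simpa only [mul_add, sum_add_distrib] using add_nonneg (hφ c hc) (hψ c hc)

theorem integral {α : Type*} [MeasurableSpace α] {ν : Measure α} {φ : α → Finset ι → ℝ}
    (hφ : ∀ᵐ a ∂ν, FourierNonneg (φ a)) (hint : ∀ T, Integrable (φ · T) ν) :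
    FourierNonneg fun T ↦ ∫ a, φ a T ∂ν := fun c hc ↦ by
  calc
    0 ≤ ∫ a, ∑ T, (∏ i ∈ T, c i) * φ a T ∂ν := integral_nonneg_of_ae (hφ.mono fun _ h ↦ h c hc)
    _ = ∑ T, (∏ i ∈ T, c i) * ∫ a, φ a T ∂ν := by
      simp only [integral_finsetSum _ fun T _ ↦ (hint T).const_mul _, integral_const_mul]

theorem sum_neg_one_pow_card_mul_nonneg {φ : Finset ι → ℝ} (hφ : FourierNonneg φ) :
    0 ≤ ∑ T, (-1) ^ #T * φ T := by
  simpa only [prod_const] using hφ (fun _ ↦ -1) (by simp)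

end FourierNonneg

theorem sum_neg_one_pow_card_eq_zero [Nonempty ι] {R : Type*} [Ring R] :
    ∑ T : Finset ι, (-1 : R) ^ #T = 0 := by
  simpa using congrArg (Int.cast : ℤ → R)
    (sum_powerset_neg_one_pow_card_of_nonempty (univ_nonempty (α := ι)))

variable [DecidableEq ι]

theorem FourierNonneg.ite_odd_mul {φ : Finset ι → ℝ} (hφ : FourierNonneg φ) (x : Finset ι)
    {q : ℝ} (hq : |q| ≤ 1) :
    FourierNonneg fun T ↦ (if Odd #(T ∩ x) then q else 1) * φ T := by
  obtain ⟨hq₁, hq₂⟩ := abs_le.1 hq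
  have hsign (i : ι) : |if i ∈ x then (-1 : ℝ) else 1| ≤ 1 := by split_ifs <;> simp
  have hsplit : (fun T ↦ (if Odd #(T ∩ x) then q else 1) * φ T) = fun T ↦
      (1 + q) / 2 * φ T + (1 - q) / 2 * ((∏ i ∈ T, if i ∈ x then (-1 : ℝ) else 1) * φ T) := by
    funext T
    rw [prod_ite_neg_one_eq_ite_odd]
    split_ifs <;> ring
  rw [hsplit]
  exact (hφ.const_mul (by linarith)).add ((hφ.prod_mul hsign).const_mul (by linarith))

/-- The mass that the weights `w` give to the sets `x` meeting `T` in an odd number of points. When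
`w x` is the measure of the set of points lying in exactly the `A i` with `i ∈ x`, this is the
measure of the iterated symmetric difference of the `A i` with `i ∈ T`. -/
def oddMass (w : Finset ι → ℝ) (T : Finset ι) : ℝ :=
  ∑ x with Odd #(T ∩ x), w x

variable {w : Finset ι → ℝ}

theorem oddMass_nonneg (hw : 0 ≤ w) (T : Finset ι) : 0 ≤ oddMass w T :=
  sum_nonneg fun x _ ↦ hw x

theorem fourierNonneg_exp_neg_oddMass (hw : 0 ≤ w) :
    FourierNonneg fun T ↦ Real.exp (-oddMass w T) := by
  have hprod (X : Finset (Finset ι)) :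
      FourierNonneg fun T ↦ ∏ x ∈ X, if Odd #(T ∩ x) then Real.exp (-w x) else 1 := by
    induction X using Finset.induction_on with
    | empty => exact FourierNonneg.one
    | insert x X hx ih =>
      simpa only [prod_insert hx] using ih.ite_odd_mul x (by simpa using hw x)
  simpa only [oddMass, ← sum_neg_distrib, Real.exp_sum, prod_filter] using hprod univ

theorem fourierNonneg_inv_add_oddMass (hw : 0 ≤ w) {t : ℝ} (ht : 0 < t) :
    FourierNonneg fun T ↦ (t + oddMass w T)⁻¹ := by
  have hneg (T : Finset ι) : -(t + oddMass w T) < 0 := by linarith [oddMass_nonneg hw T]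
  have hlaplace (T : Finset ι) :
      (t + oddMass w T)⁻¹ = ∫ s in Set.Ioi 0, Real.exp (-(t + oddMass w T) * s) := by
    rw [integral_exp_mul_Ioi (hneg T)]
    simp only [mul_zero, Real.exp_zero, neg_div_neg_eq, one_div]
  simp only [hlaplace]
  refine .integral ?_ fun T ↦ integrableOn_exp_mul_Ioi (hneg T) 0
  filter_upwards [ae_restrict_mem measurableSet_Ioi] with s (hs : 0 < s)
  have hscaled : FourierNonneg fun T ↦ Real.exp (-oddMass (s • w) T) :=
    fourierNonneg_exp_neg_oddMass (smul_nonneg hs.le hw)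
  convert hscaled.const_mul (Real.exp_nonneg (-t * s)) using 2 with T
  rw [← Real.exp_add]
  simp only [oddMass, Pi.smul_apply, smul_eq_mul, ← mul_sum]
  ring_nf

variable [Nonempty ι]

theorem sum_neg_one_pow_card_mul_oddMass_nonpos (hw : 0 ≤ w) :
    ∑ T, (-1) ^ #T * oddMass w T ≤ 0 := by
  have hparity (x : Finset ι) :
      ∑ T : Finset ι, (-1 : ℝ) ^ #T * (if Odd #(T ∩ x) then 1 else 0) ≤ 0 := by
    have heven : 0 ≤ ∑ T : Finset ι, (-1 : ℝ) ^ #T * (if Odd #(T ∩ x) then 0 else 1) := by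
      simpa only [Pi.one_apply, mul_one] using
        (FourierNonneg.one.ite_odd_mul x (q := 0) (by simp)).sum_neg_one_pow_card_mul_nonneg
    have hcompl (T : Finset ι) : (if Odd #(T ∩ x) then (1 : ℝ) else 0) =
        1 - if Odd #(T ∩ x) then 0 else 1 := by
      split_ifs <;> simp
    simp only [hcompl, mul_sub, mul_one, sum_sub_distrib, sum_neg_one_pow_card_eq_zero]
    linarith
  calc
    ∑ T, (-1) ^ #T * oddMass w T
        = ∑ x, w x * ∑ T : Finset ι, (-1 : ℝ) ^ #T * (if Odd #(T ∩ x) then 1 else 0) := by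
      simp only [oddMass, sum_filter, mul_sum]
      rw [sum_comm]
      refine sum_congr rfl fun x _ ↦ sum_congr rfl fun T _ ↦ ?_
      split_ifs <;> ring
    _ ≤ 0 := sum_nonpos fun x _ ↦ mul_nonpos_of_nonneg_of_nonpos (hw x) (hparity x)

theorem sum_neg_one_pow_card_mul_rpowIntegrand₀₁_nonpos (hw : 0 ≤ w) (p : ℝ) {t : ℝ} (ht : 0 < t) :
    ∑ T, (-1) ^ #T * Real.rpowIntegrand₀₁ p t (oddMass w T) ≤ 0 := by
  have hinv := (fourierNonneg_inv_add_oddMass hw ht).sum_neg_one_pow_card_mul_nonneg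
  calc
    ∑ T, (-1) ^ #T * Real.rpowIntegrand₀₁ p t (oddMass w T)
        = t ^ p * (t⁻¹ * ∑ T : Finset ι, (-1) ^ #T - ∑ T, (-1) ^ #T * (t + oddMass w T)⁻¹) := by
      simp only [Real.rpowIntegrand₀₁, mul_sum, ← sum_sub_distrib]
      exact sum_congr rfl fun T _ ↦ by ring
    _ ≤ 0 := by
      rw [sum_neg_one_pow_card_eq_zero, mul_zero, zero_sub, mul_neg]
      exact neg_nonpos.2 (mul_nonneg (by positivity) hinv)

theorem sum_neg_one_pow_card_mul_oddMass_rpow_nonpos (hw : 0 ≤ w) {p : ℝ} (hp₀ : 0 < p)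
    (hp₁ : p ≤ 1) : ∑ T, (-1) ^ #T * oddMass w T ^ p ≤ 0 := by
  obtain rfl | hp₁ := hp₁.eq_or_lt
  · simpa only [Real.rpow_one] using sum_neg_one_pow_card_mul_oddMass_nonpos hw
  obtain ⟨ν, hν⟩ := Real.exists_measure_rpow_eq_integral_rpowIntegrand₀₁ ⟨hp₀, hp₁⟩
  have hint (T : Finset ι) := (hν _ (oddMass_nonneg hw T)).1
  calc
    ∑ T, (-1) ^ #T * oddMass w T ^ p
        = ∫ t in Set.Ioi 0, ∑ T, (-1) ^ #T * Real.rpowIntegrand₀₁ p t (oddMass w T) ∂ν := by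
      rw [integral_finsetSum _ fun T _ ↦ (hint T).const_mul _]
      simp only [integral_const_mul, (hν _ (oddMass_nonneg hw _)).2]
    _ ≤ 0 := setIntegral_nonpos measurableSet_Ioi fun t ht ↦
      sum_neg_one_pow_card_mul_rpowIntegrand₀₁_nonpos hw p ht

end Fourier

section SymmDiffOver

variable {Ω ι : Type*}

open scoped Classical in
/-- The iterated symmetric difference of the sets `A i` with `i ∈ T`, described by parity so that
no order on `T` is needed. -/
def symmDiffOver (A : ι → Set Ω) (T : Finset ι) : Set Ω :=
  {ω | Odd #{i ∈ T | ω ∈ A i}}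

theorem symmDiffOver_empty (A : ι → Set Ω) : symmDiffOver A ∅ = ∅ := by
  simp [symmDiffOver]

theorem symmDiffOver_singleton (A : ι → Set Ω) (i : ι) : symmDiffOver A {i} = A i := by
  ext ω
  by_cases hω : ω ∈ A i <;> simp [symmDiffOver, filter_singleton, hω]

variable [DecidableEq ι]

theorem symmDiffOver_insert (A : ι → Set Ω) {i : ι} {T : Finset ι} (hi : i ∉ T) :
    symmDiffOver A (insert i T) = A i ∆ symmDiffOver A T := by
  ext ω
  by_cases hω : ω ∈ A i <;>
    simp [symmDiffOver, Set.mem_symmDiff, filter_insert, hω, hi, Nat.odd_add_one]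

theorem symmDiffOver_pair (A : ι → Set Ω) {i j : ι} (hij : i ≠ j) :
    symmDiffOver A {i, j} = A i ∆ A j := by
  rw [symmDiffOver_insert A (notMem_singleton.2 hij), symmDiffOver_singleton]

end SymmDiffOver

section Incidence

variable {Ω ι : Type*} [Fintype ι]

open scoped Classical in
/-- The indices of the sets of the family `A` that contain `ω`; its fibres are the cells of the
Venn diagram of `A`. -/
noncomputable def incidence (A : ι → Set Ω) (ω : Ω) : Finset ι := {i | ω ∈ A i}

theorem mem_incidence {A : ι → Set Ω} {ω : Ω} {i : ι} : i ∈ incidence A ω ↔ ω ∈ A i := by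
  simp [incidence]

theorem symmDiffOver_eq_incidence_preimage [DecidableEq ι] (A : ι → Set Ω) (T : Finset ι) :
    symmDiffOver A T = incidence A ⁻¹' {x | Odd #(T ∩ x)} := by
  classical
  ext ω
  have hinter : {i ∈ T | ω ∈ A i} = T ∩ incidence A ω := by
    ext i
    simp [mem_incidence]
  simp [symmDiffOver, hinter]

theorem incidence_preimage_singleton_subset (A : ι → Set Ω) {x : Finset ι} {i : ι} (hi : i ∈ x) :
    incidence A ⁻¹' {x} ⊆ A i := by
  rintro ω rfl
  exact mem_incidence.1 hi

variable [MeasurableSpace Ω] {μ : Measure Ω} {A : ι → Set Ω}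

theorem measurableSet_incidence_preimage_singleton (hA : ∀ i, MeasurableSet (A i))
    (x : Finset ι) : MeasurableSet (incidence A ⁻¹' {x}) := by
  have hcell : incidence A ⁻¹' {x} = ⋂ i, {ω | ω ∈ A i ↔ i ∈ x} := by
    ext ω
    simp [Finset.ext_iff, mem_incidence]
  rw [hcell]
  exact .iInter fun i ↦ (hA i).iff (.const _)

theorem measureReal_symmDiffOver [DecidableEq ι] (hA : ∀ i, MeasurableSet (A i))
    (hμA : ∀ i, μ (A i) ≠ ⊤) (T : Finset ι) :
    μ.real (symmDiffOver A T) = oddMass (fun x ↦ μ.real (incidence A ⁻¹' {x})) T := by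
  have hfinite : ∀ x ∈ ({x | Odd #(T ∩ x)} : Finset (Finset ι)), μ (incidence A ⁻¹' {x}) ≠ ⊤ := by
    intro x hx
    obtain ⟨i, hi⟩ := card_pos.1 (mem_filter.1 hx).2.pos
    exact measure_ne_top_of_subset
      (incidence_preimage_singleton_subset A (mem_inter.1 hi).2) (hμA i)
  rw [symmDiffOver_eq_incidence_preimage, oddMass, sum_measureReal_preimage_singleton _
    (fun x _ ↦ measurableSet_incidence_preimage_singleton hA x) hfinite, coe_filter_univ]

theorem sum_neg_one_pow_card_mul_measureReal_symmDiffOver_rpow_nonpos [Nonempty ι]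
    (hA : ∀ i, MeasurableSet (A i)) (hμA : ∀ i, μ (A i) ≠ ⊤) {p : ℝ} (hp₀ : 0 < p) (hp₁ : p ≤ 1) :
    ∑ T, (-1) ^ #T * μ.real (symmDiffOver A T) ^ p ≤ 0 := by
  classical
  simpa only [measureReal_symmDiffOver hA hμA] using
    sum_neg_one_pow_card_mul_oddMass_rpow_nonpos (fun _ ↦ measureReal_nonneg) hp₀ hp₁

end Incidence

theorem sum_neg_one_pow_card_mul_fin_three {R : Type*} [Ring R] (f : Finset (Fin 3) → R) :
    ∑ T, (-1) ^ #T * f T =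
      f ∅ + f {0, 1} + f {1, 2} + f {2, 0} - f {0} - f {1} - f {2} - f {0, 1, 2} := by
  have huniv : (univ : Finset (Finset (Fin 3))) =
      {∅, {0, 1}, {1, 2}, {2, 0}, {0}, {1}, {2}, {0, 1, 2}} := by decide
  have hthree : #({0, 1, 2} : Finset (Fin 3)) = 3 := by decide
  rw [huniv]
  simp +decide [hthree, Odd.neg_one_pow, sub_eq_add_neg, add_assoc]

theorem hlawka_measure_symmDiff_general {Ω : Type*} [MeasurableSpace Ω] {μ : Measure Ω}
    {A B C : Set Ω} (hA : MeasurableSet A) (hB : MeasurableSet B) (hC : MeasurableSet C)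
    (hμA : μ A ≠ ⊤) (hμB : μ B ≠ ⊤) (hμC : μ C ≠ ⊤) {p : ℝ} (hp₀ : 0 < p) (hp₁ : p ≤ 1) :
    μ.real (A ∆ B) ^ p + μ.real (B ∆ C) ^ p + μ.real (C ∆ A) ^ p
      ≤ μ.real A ^ p + μ.real B ^ p + μ.real C ^ p + μ.real (A ∆ B ∆ C) ^ p := by
  have hsum := sum_neg_one_pow_card_mul_measureReal_symmDiffOver_rpow_nonpos (μ := μ)
    (A := ![A, B, C]) (by simp [Fin.forall_fin_succ, *]) (by simp [Fin.forall_fin_succ, *]) hp₀ hp₁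
  have htriple : symmDiffOver ![A, B, C] {0, 1, 2} = A ∆ B ∆ C := by
    rw [symmDiffOver_insert _ (by decide), symmDiffOver_pair _ (by decide), symmDiff_assoc]
    rfl
  rw [sum_neg_one_pow_card_mul_fin_three, htriple, symmDiffOver_empty, measureReal_empty,
    Real.zero_rpow hp₀.ne', symmDiffOver_pair _ (by decide), symmDiffOver_pair _ (by decide),
    symmDiffOver_pair _ (by decide)] at hsum
  simp only [symmDiffOver_singleton, Matrix.cons_val] at hsum
  linarith

theorem hlawka_measure_symmDiff {Ω : Type*} [MeasurableSpace Ω]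
    (μ : Measure Ω) [IsFiniteMeasure μ]
    (A B C : Set Ω) (hA : MeasurableSet A) (hB : MeasurableSet B)
    (hC : MeasurableSet C) (k : ℕ) :
    (μ (symmDiff A B)).toReal ^ (1 / (2 : ℝ) ^ k) + (μ (symmDiff B C)).toReal ^ (1 / (2 : ℝ) ^ k)
        + (μ (symmDiff C A)).toReal ^ (1 / (2 : ℝ) ^ k)
      ≤ (μ A).toReal ^ (1 / (2 : ℝ) ^ k) + (μ B).toReal ^ (1 / (2 : ℝ) ^ k)
        + (μ C).toReal ^ (1 / (2 : ℝ) ^ k)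
        + (μ (symmDiff (symmDiff A B) C)).toReal ^ (1 / (2 : ℝ) ^ k) :=
  hlawka_measure_symmDiff_general hA hB hC (measure_ne_top μ A) (measure_ne_top μ B)
    (measure_ne_top μ C) (by positivity)
    (div_le_one_of_le₀ (one_le_pow₀ one_le_two) (by positivity))
end

section
/- Let G be an abelian group and x ↦ |x| a nonnegative, symmetric and subadditive function on G, i.e. |x| ≥ 0, |−x| = |x| and |x| + |y| ≥ |x+y| for all x, y ∈ G. Let S : ℝ → ℝ be concave on [0, ∞) and nonnegative on [0, ∞). Suppose that for all x, y, z ∈ G: S(|x+y|)² + S(|y+z|)² + S(|z+x|)² ≤ S(|x|)² + S(|y|)² + S(|z|)² + S(|x+y+z|)². Then for all x, y, z ∈ G: S(|x+y|) + S(|y+z|) + S(|z+x|) ≤ S(|x|) + S(|y|) + S(|z|) + S(|x+y+z|). -/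
/-!
A concave function that is nonnegative on `[0, ∞)` is monotone and subadditive there, so `S ∘ nm` is
again symmetric and subadditive. For such an `f`, write `a, b, c, d` for its values at `x`, `y`,
`z`, `x + y + z` and `p, q, r` for its values at `x + y`, `y + z`, `z + x`. With
`s = a + b + c + d`, the right-hand side of Hlawka's identity

`s * (s - (p + q + r)) = (a + b - p) * (c + d - p) + (b + c - q) * (a + d - q)
  + (c + a - r) * (b + d - r) + (a ^ 2 + b ^ 2 + c ^ 2 + d ^ 2 - (p ^ 2 + q ^ 2 + r ^ 2))`

is nonnegative, because its six linear factors are nonnegative by the triangle inequality and its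
last term by the squared inequality. Divide by `s` when `s` is positive.
-/

open Set

section Concave

theorem smul_le_map_smul_of_concaveOn {𝕜 E β : Type*} [Ring 𝕜] [PartialOrder 𝕜] [IsOrderedRing 𝕜]
    [AddCommMonoid E] [Module 𝕜 E] [AddCommMonoid β] [PartialOrder β] [IsOrderedAddMonoid β]
    [Module 𝕜 β] [PosSMulMono 𝕜 β]
    {s : Set E} {f : E → β} (hf : ConcaveOn 𝕜 s f) (hs : 0 ∈ s) (hf0 : 0 ≤ f 0)
    {x : E} (hx : x ∈ s) {t : 𝕜} (ht0 : 0 ≤ t) (ht1 : t ≤ 1) : t • f x ≤ f (t • x) := calc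
  t • f x ≤ t • f x + (1 - t) • f 0 := le_add_of_nonneg_right (smul_nonneg (sub_nonneg.2 ht1) hf0)
  _ ≤ f (t • x + (1 - t) • 0) := hf.2 hx hs ht0 (sub_nonneg.2 ht1) (add_sub_cancel _ _)
  _ = f (t • x) := by rw [smul_zero, add_zero]

variable {𝕜 : Type*} [Field 𝕜] [LinearOrder 𝕜] [IsStrictOrderedRing 𝕜]

theorem monotoneOn_of_concaveOn_Ici_of_bddBelow {f : 𝕜 → 𝕜} {a : 𝕜}
    (hf : ConcaveOn 𝕜 (Ici a) f) (hbdd : BddBelow (f '' Ici a)) : MonotoneOn f (Ici a) := by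
  intro u hu v hv huv
  obtain ⟨m, hm⟩ := hbdd
  have lower_bound {t : 𝕜} (ht : t ∈ Ici a) : m ≤ f t := hm (mem_image_of_mem f ht)
  by_contra! hdrop
  have hlt : u < v := huv.lt_of_ne fun h => hdrop.ne (congrArg f h.symm)
  have hslope : (f v - f u) / (v - u) < 0 :=
    div_neg_of_neg_of_pos (sub_neg.2 hdrop) (sub_pos.2 hlt)
  -- `v + t` is the point where the line through `(u, f u)` and `(v, f v)` reaches height `m - 1`.
  let t := (m - 1 - f v) / ((f v - f u) / (v - u))
  have ht : 0 < t := div_pos_of_neg_of_neg (by linarith [lower_bound hv]) hslope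
  have hvt : v + t ∈ Ici a := le_add_of_le_of_nonneg hv ht.le
  have hsecant : f (v + t) - f v ≤ m - 1 - f v := calc
    f (v + t) - f v ≤ (f v - f u) / (v - u) * t := by
      simpa only [add_sub_cancel_left, div_le_iff₀ ht] using
        hf.slope_anti_adjacent hu hvt hlt (lt_add_of_pos_right v ht)
    _ = m - 1 - f v := mul_div_cancel₀ _ hslope.ne
  linarith [lower_bound hvt]

theorem map_add_le_add_of_concaveOn {β : Type*} [AddCommMonoid β] [PartialOrder β]
    [IsOrderedAddMonoid β] [Module 𝕜 β] [PosSMulMono 𝕜 β]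
    {s : Set 𝕜} {f : 𝕜 → β} (hf : ConcaveOn 𝕜 s f) (hs : 0 ∈ s) (hf0 : 0 ≤ f 0)
    {a b : 𝕜} (ha : 0 ≤ a) (hb : 0 ≤ b) (hab : a + b ∈ s) : f (a + b) ≤ f a + f b := by
  rcases (add_nonneg ha hb).eq_or_lt with hzero | hpos
  · obtain ⟨rfl, rfl⟩ := (add_eq_zero_iff_of_nonneg ha hb).1 hzero.symm
    simpa only [add_zero] using le_add_of_nonneg_left hf0
  · have chord {c : 𝕜} (hc : 0 ≤ c) (hcab : c ≤ a + b) : (c / (a + b)) • f (a + b) ≤ f c := by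
      simpa only [smul_eq_mul, div_mul_cancel₀ c hpos.ne'] using
        smul_le_map_smul_of_concaveOn hf hs hf0 hab (div_nonneg hc hpos.le)
          (div_le_one_of_le₀ hcab hpos.le)
    calc
      f (a + b) = (a / (a + b)) • f (a + b) + (b / (a + b)) • f (a + b) := by
        rw [← add_smul, ← add_div, div_self hpos.ne', one_smul]
      _ ≤ f a + f b :=
        add_le_add (chord ha (le_add_of_nonneg_right hb)) (chord hb (le_add_of_nonneg_left ha))

theorem map_le_add_of_le_add_of_concaveOn_Ici {f : 𝕜 → 𝕜} (hf : ConcaveOn 𝕜 (Ici 0) f)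
    (hnonneg : ∀ t, 0 ≤ t → 0 ≤ f t) {u a b : 𝕜} (hu : 0 ≤ u) (ha : 0 ≤ a) (hb : 0 ≤ b)
    (huab : u ≤ a + b) : f u ≤ f a + f b := by
  have hab : 0 ≤ a + b := add_nonneg ha hb
  have hbdd : BddBelow (f '' Ici 0) := ⟨0, forall_mem_image.2 hnonneg⟩
  calc
    f u ≤ f (a + b) := monotoneOn_of_concaveOn_Ici_of_bddBelow hf hbdd hu hab huab
    _ ≤ f a + f b := map_add_le_add_of_concaveOn hf self_mem_Ici (hnonneg 0 le_rfl) ha hb hab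

end Concave

section Hlawka

variable {R : Type*} [CommRing R] [LinearOrder R] [IsStrictOrderedRing R]

theorem add_add_le_of_sq_add_sq_add_sq_le_s14 {a b c d p q r : R}
    (hpab : p ≤ a + b) (hpcd : p ≤ c + d) (hqbc : q ≤ b + c) (hqad : q ≤ a + d)
    (hrca : r ≤ c + a) (hrbd : r ≤ b + d)
    (hsq : p ^ 2 + q ^ 2 + r ^ 2 ≤ a ^ 2 + b ^ 2 + c ^ 2 + d ^ 2) :
    p + q + r ≤ a + b + c + d := by
  rcases le_or_gt (a + b + c + d) 0 with hs | hs
  · -- The six linear hypotheses add up to `2 * (p + q + r) ≤ 3 * (a + b + c + d)`.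
    linarith
  · have hp := mul_nonneg (sub_nonneg.2 hpab) (sub_nonneg.2 hpcd)
    have hq := mul_nonneg (sub_nonneg.2 hqbc) (sub_nonneg.2 hqad)
    have hr := mul_nonneg (sub_nonneg.2 hrca) (sub_nonneg.2 hrbd)
    have hlawka_identity :
        (a + b + c + d) * (a + b + c + d - (p + q + r)) =
          (a + b - p) * (c + d - p) + (b + c - q) * (a + d - q) + (c + a - r) * (b + d - r)
            + (a ^ 2 + b ^ 2 + c ^ 2 + d ^ 2 - (p ^ 2 + q ^ 2 + r ^ 2)) := by ring
    have hmul : 0 ≤ (a + b + c + d) * (a + b + c + d - (p + q + r)) := by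
      rw [hlawka_identity]
      exact add_nonneg (add_nonneg (add_nonneg hp hq) hr) (sub_nonneg.2 hsq)
    exact sub_nonneg.1 (nonneg_of_mul_nonneg_right hmul hs)

theorem ressel_hlawka_general {G : Type*} [AddCommGroup G] {f : G → R}
    (hneg : ∀ x, f (-x) = f x) (hadd : ∀ x y, f (x + y) ≤ f x + f y) {x y z : G}
    (hsq : f (x + y) ^ 2 + f (y + z) ^ 2 + f (z + x) ^ 2
      ≤ f x ^ 2 + f y ^ 2 + f z ^ 2 + f (x + y + z) ^ 2) :
    f (x + y) + f (y + z) + f (z + x) ≤ f x + f y + f z + f (x + y + z) := by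
  have le_add_map_add (u v : G) : f u ≤ f v + f (u + v) := by
    simpa only [hneg, neg_add_cancel_comm_assoc] using hadd (-v) (u + v)
  have hyz : f (y + z) ≤ f x + f (x + y + z) := by
    simpa only [add_rotate y z x, add_rotate z x y] using le_add_map_add (y + z) x
  have hzx : f (z + x) ≤ f y + f (x + y + z) := by
    simpa only [add_rotate z x y] using le_add_map_add (z + x) y
  exact add_add_le_of_sq_add_sq_add_sq_le_s14 (hadd x y) (le_add_map_add (x + y) z)
    (hadd y z) hyz (hadd z x) hzx hsq

end Hlawka

theorem ressel_hlawka {G : Type*} [AddCommGroup G]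
    (nm : G → ℝ) (hnm0 : ∀ x : G, 0 ≤ nm x)
    (hsymm : ∀ x : G, nm (-x) = nm x)
    (hsub : ∀ x y : G, nm (x + y) ≤ nm x + nm y)
    (S : ℝ → ℝ) (hconc : ConcaveOn ℝ (Set.Ici (0 : ℝ)) S)
    (hS0 : ∀ t : ℝ, 0 ≤ t → 0 ≤ S t)
    (hsq : ∀ x y z : G,
      S (nm (x + y)) ^ 2 + S (nm (y + z)) ^ 2 + S (nm (z + x)) ^ 2
        ≤ S (nm x) ^ 2 + S (nm y) ^ 2 + S (nm z) ^ 2 + S (nm (x + y + z)) ^ 2) :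
    ∀ x y z : G,
      S (nm (x + y)) + S (nm (y + z)) + S (nm (z + x))
        ≤ S (nm x) + S (nm y) + S (nm z) + S (nm (x + y + z)) :=
  fun x y z => ressel_hlawka_general (f := fun x => S (nm x)) (fun x => congrArg S (hsymm x))
    (fun x y => map_le_add_of_le_add_of_concaveOn_Ici hconc hS0 (hnm0 (x + y)) (hnm0 x) (hnm0 y)
      (hsub x y)) (hsq x y z)
end

section
/- Let Ω be a nonempty set, H a real inner product space with inner product ⟨·,·⟩ and induced norm ‖·‖, and T a linear signature-preserving functional (T(ζ) ≥ 0 whenever ζ(ω) ≥ 0 for all ω) defined on a linear subspace S of the real-valued functions on Ω containing the constant function 1. Let f : Ω → H and w ∈ H satisfy: (i) for every a ∈ H the function ω ↦ ⟨f(ω), a⟩ belongs to S and T(ω ↦ ⟨f(ω), a⟩) = ⟨w, a⟩; (ii) the functions ω ↦ ‖f(ω)‖, ω ↦ ‖f(ω) − w‖, ω ↦ ‖f(ω)‖², and ω ↦ ‖f(ω) − w‖² belong to S, together with the pointwise product of ω ↦ ‖f(ω)‖ and ω ↦ ‖f(ω) − w‖; (iii) T(ω ↦ ‖f(ω)‖)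 > 0; and (iv) for every x ∈ Ω such that there is no α ≥ 0 with −f(x) = α·w, one has T(ω ↦ ‖f(ω)‖) ≥ ‖f(x)‖ + ‖w − f(x)‖. Then (T(1) − 2)·‖w‖ + T(ω ↦ ‖f(ω)‖) ≥ T(ω ↦ ‖f(ω) − w‖). -/
open RealInnerProductSpace

/-!
For a vector `x` and a real number `r`, consider Hlawka's product
`(‖x‖ + ‖w‖ - ‖x - w‖) * (r - ‖x‖ - ‖x - w‖)`. Its first factor is nonnegative by the triangle
inequality and vanishes when `-x` and `w` lie on a common ray. Since
`‖x - w‖ ^ 2 - ‖x‖ ^ 2 = ‖w‖ ^ 2 - 2 * ⟪x, w⟫`, its quadratic terms cancel: it is affine in `‖x‖`,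
`‖x - w‖` and `⟪x, w⟫`, so a positive functional `T` can be applied to its nonnegativity. When `w`
is the mean of `f` and `r = T ‖f‖`, the resulting inequality is the desired one multiplied by
`T ‖f‖ + ‖w‖`.
-/

section Pointwise

variable {H : Type*} [NormedAddCommGroup H]

theorem hlawka_product_nonneg [NormedSpace ℝ H] {x w : H} {r : ℝ}
    (h : ¬ SameRay ℝ (-x) w → ‖x‖ + ‖w - x‖ ≤ r) :
    0 ≤ (‖x‖ + ‖w‖ - ‖x - w‖) * (r - ‖x‖ - ‖x - w‖) := by
  by_cases hray : SameRay ℝ (-x) w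
  · have norm_sub_eq : ‖x - w‖ = ‖x‖ + ‖w‖ := by
      simpa only [neg_add_eq_sub, norm_sub_rev w x, norm_neg] using hray.norm_add
    simp only [norm_sub_eq, sub_self, zero_mul, le_refl]
  · have hr := h hray
    rw [norm_sub_rev] at hr
    exact mul_nonneg (sub_nonneg.2 (norm_sub_le x w)) (by linarith)

variable [InnerProductSpace ℝ H]

theorem hlawka_product_eq (x w : H) (r : ℝ) :
    (‖x‖ + ‖w‖ - ‖x - w‖) * (r - ‖x‖ - ‖x - w‖) =
      (r - ‖w‖) * ‖x‖ + (r + ‖w‖) * ‖w‖ - 2 * ⟪x, w⟫ - (r + ‖w‖) * ‖x - w‖ := by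
  linear_combination norm_sub_sq_real x w

theorem add_norm_mul_norm_sub_le {x w : H} {r : ℝ}
    (h : ¬ SameRay ℝ (-x) w → ‖x‖ + ‖w - x‖ ≤ r) :
    (r + ‖w‖) * ‖x - w‖ ≤ (r - ‖w‖) * ‖x‖ + (r + ‖w‖) * ‖w‖ - 2 * ⟪x, w⟫ :=
  sub_nonneg.1 (hlawka_product_eq x w r ▸ hlawka_product_nonneg h)

end Pointwise

section Functional

variable {Ω H : Type*} [NormedAddCommGroup H] [InnerProductSpace ℝ H]
  {S : Submodule ℝ (Ω → ℝ)} {T : S →ₗ[ℝ] ℝ} {f : Ω → H} {w : H}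

theorem add_norm_mul_map_norm_sub_le (hT : Monotone T) (h1 : (1 : Ω → ℝ) ∈ S)
    (hinner : (fun ω => ⟪f ω, w⟫) ∈ S) (hnf : (fun ω => ‖f ω‖) ∈ S)
    (hnfw : (fun ω => ‖f ω - w‖) ∈ S) {r : ℝ}
    (hctrl : ∀ x : Ω, ¬ SameRay ℝ (-f x) w → ‖f x‖ + ‖w - f x‖ ≤ r) :
    (r + ‖w‖) * T ⟨fun ω => ‖f ω - w‖, hnfw⟩ ≤
      (r - ‖w‖) * T ⟨fun ω => ‖f ω‖, hnf⟩ + (r + ‖w‖) * ‖w‖ * T ⟨1, h1⟩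
        - 2 * T ⟨fun ω => ⟪f ω, w⟫, hinner⟩ := by
  have pointwise_le : (r + ‖w‖) • (⟨fun ω => ‖f ω - w‖, hnfw⟩ : S) ≤
      (r - ‖w‖) • (⟨fun ω => ‖f ω‖, hnf⟩ : S) + ((r + ‖w‖) * ‖w‖) • (⟨1, h1⟩ : S)
        - (2 : ℝ) • (⟨fun ω => ⟪f ω, w⟫, hinner⟩ : S) := fun ω => by
    simpa using add_norm_mul_norm_sub_le (hctrl ω)
  simpa only [map_sub, map_add, map_smul, smul_eq_mul] using hT pointwise_le

theorem hlawka_inner_operator_general (h1 : (1 : Ω → ℝ) ∈ S)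
    (hT : ∀ ζ : S, (∀ ω : Ω, 0 ≤ (ζ : Ω → ℝ) ω) → 0 ≤ T ζ)
    (hinner : ∀ a : H, (fun ω => ⟪f ω, a⟫) ∈ S)
    (hTinner : ∀ a : H, T ⟨fun ω => ⟪f ω, a⟫, hinner a⟩ = ⟪w, a⟫)
    (hnf : (fun ω => ‖f ω‖) ∈ S)
    (hnfw : (fun ω => ‖f ω - w‖) ∈ S)
    (hctrl : ∀ x : Ω, ¬ SameRay ℝ (-f x) w →
      ‖f x‖ + ‖w - f x‖ ≤ T ⟨fun ω => ‖f ω‖, hnf⟩) :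
    T ⟨fun ω => ‖f ω - w‖, hnfw⟩ ≤
      (T ⟨1, h1⟩ - 2) * ‖w‖ + T ⟨fun ω => ‖f ω‖, hnf⟩ := by
  rcases eq_or_ne w 0 with rfl | hw
  · simp only [sub_zero, norm_zero, mul_zero, zero_add, le_refl]
  have hT_mono : Monotone T := (monotone_iff_map_nonneg T).2 hT
  have factor_pos : 0 < T ⟨fun ω => ‖f ω‖, hnf⟩ + ‖w‖ :=
    add_pos_of_nonneg_of_pos (hT _ fun ω => norm_nonneg (f ω)) (norm_pos_iff.2 hw)
  have mul_le := add_norm_mul_map_norm_sub_le hT_mono h1 (hinner w) hnf hnfw hctrl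
  rw [hTinner, real_inner_self_eq_norm_sq] at mul_le
  exact le_of_mul_le_mul_left (mul_le.trans_eq (by ring)) factor_pos

end Functional

theorem hlawka_inner_operator {Ω H : Type*} [Nonempty Ω]
    [NormedAddCommGroup H] [InnerProductSpace ℝ H]
    (S : Submodule ℝ (Ω → ℝ)) (h1 : (1 : Ω → ℝ) ∈ S)
    (T : S →ₗ[ℝ] ℝ)
    (hT : ∀ ζ : S, (∀ ω : Ω, 0 ≤ (ζ : Ω → ℝ) ω) → 0 ≤ T ζ)
    (f : Ω → H) (w : H)
    (hinner : ∀ a : H, (fun ω => ⟪f ω, a⟫) ∈ S)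
    (hTinner : ∀ a : H, T ⟨fun ω => ⟪f ω, a⟫, hinner a⟩ = ⟪w, a⟫)
    (hnf : (fun ω => ‖f ω‖) ∈ S)
    (hnfw : (fun ω => ‖f ω - w‖) ∈ S)
    (hnf2 : (fun ω => ‖f ω‖ ^ 2) ∈ S)
    (hnfw2 : (fun ω => ‖f ω - w‖ ^ 2) ∈ S)
    (hprod : (fun ω => ‖f ω‖ * ‖f ω - w‖) ∈ S)
    (hpos : 0 < T ⟨fun ω => ‖f ω‖, hnf⟩)
    (hctrl : ∀ x : Ω, (¬ ∃ α : ℝ, 0 ≤ α ∧ -f x = α • w) →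
      ‖f x‖ + ‖w - f x‖ ≤ T ⟨fun ω => ‖f ω‖, hnf⟩) :
    (T ⟨1, h1⟩ - 2) * ‖w‖ + T ⟨fun ω => ‖f ω‖, hnf⟩
      ≥ T ⟨fun ω => ‖f ω - w‖, hnfw⟩ := by
  exact hlawka_inner_operator_general h1 hT hinner hTinner hnf hnfw fun x hray =>
    hctrl x fun ⟨_, hα, hx⟩ => hray (hx ▸ SameRay.sameRay_nonneg_smul_left w hα)
end

section
/- Let (Ω, μ) be a finite measure space, let H be a real Hilbert space, and let f, g : Ω → H be Bochner integrable functions with ∫_Ω ‖f‖ dμ ≠ 0, ∫_Ω ‖g‖ dμ ≠ 0, and (∫_Ω f dμ)/(∫_Ω ‖f‖ dμ) = (∫_Ω g dμ)/(∫_Ω ‖g‖ dμ). Assume that for every x ∈ Ω such that there is no α ≥ 0 with −g(x) = α·∫_Ω f dμ, one has ∫_Ω ‖f‖ dμ ≥ ‖g(x)‖ + ‖g(x) − ∫_Ω f dμ‖. Then (μ(Ω) − C)·‖∫_Ω f dμ‖ + ∫_Ω ‖g‖ dμ ≥ ∫_Ω ‖g(ω) − ∫_Ω f dμ‖ dμ(ω),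 where C = 2·(∫_Ω ‖g‖ dμ)/(∫_Ω ‖f‖ dμ). -/
open MeasureTheory

/-!
As in the proof of Hlawka's inequality, write the product of the defects `‖u‖ + ‖v‖ - ‖v - u‖` and
`a - ‖v‖ - ‖v - u‖` as an expression that involves only norms and one inner product. The first
defect is nonnegative, and it vanishes when `v` and `-u` are on the same ray; elsewhere the second
one is nonnegative by assumption. Put `v = g x`, `u = ∫ f`, `a = ∫ ‖f‖` and integrate: the inner
product becomes `⟪u, ∫ g⟫`, which is known because `∫ g` is proportional to `u`, and the factor
`a + ‖u‖` cancels.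
-/

section NormDefect

variable {E : Type*} [SeminormedAddCommGroup E]

theorem norm_defect_mul_eq [InnerProductSpace ℝ E] (a : ℝ) (u v : E) :
    (‖u‖ + ‖v‖ - ‖v - u‖) * (a - ‖v‖ - ‖v - u‖) =
      (a + ‖u‖) * (‖u‖ + ‖v‖ - ‖v - u‖) - 2 * (‖u‖ * ‖v‖ + inner ℝ u v) := by
  have h_sq := norm_sub_sq_real v u
  rw [real_inner_comm] at h_sq
  linear_combination h_sq

theorem norm_defect_mul_nonneg [NormedSpace ℝ E] {a : ℝ} {u v : E}
    (h : ¬ SameRay ℝ v (-u) → ‖v‖ + ‖v - u‖ ≤ a) :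
    0 ≤ (‖u‖ + ‖v‖ - ‖v - u‖) * (a - ‖v‖ - ‖v - u‖) := by
  by_cases h_ray : SameRay ℝ v (-u)
  · have h_add : ‖v - u‖ = ‖v‖ + ‖u‖ := by rw [sub_eq_add_neg, h_ray.norm_add, norm_neg]
    simp [h_add, add_comm]
  · exact mul_nonneg (by linarith [norm_sub_le v u]) (by linarith [h h_ray])

end NormDefect

section Integral

variable {Ω H : Type*} [MeasurableSpace Ω] {μ : Measure Ω} [IsFiniteMeasure μ]
  [NormedAddCommGroup H] [InnerProductSpace ℝ H] [CompleteSpace H] {g : Ω → H}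

theorem integral_norm_defect_mul (hg : Integrable g μ) (a : ℝ) (u : H) :
    ∫ x, (‖u‖ + ‖g x‖ - ‖g x - u‖) * (a - ‖g x‖ - ‖g x - u‖) ∂μ =
      (a + ‖u‖) * (μ.real Set.univ * ‖u‖ + ∫ x, ‖g x‖ ∂μ - ∫ x, ‖g x - u‖ ∂μ) -
        2 * (‖u‖ * ∫ x, ‖g x‖ ∂μ + inner ℝ u (∫ x, g x ∂μ)) := by
  have h_norm_add : Integrable (fun x ↦ ‖u‖ + ‖g x‖) μ := (integrable_const _).add hg.norm
  have h_norm_sub : Integrable (fun x ↦ ‖g x - u‖) μ := (hg.sub (integrable_const u)).norm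
  have h_defect : Integrable (fun x ↦ ‖u‖ + ‖g x‖ - ‖g x - u‖) μ := h_norm_add.sub h_norm_sub
  have h_norm_mul : Integrable (fun x ↦ ‖u‖ * ‖g x‖) μ := hg.norm.const_mul _
  have h_inner : Integrable (fun x ↦ inner ℝ u (g x)) μ := hg.const_inner u
  have h_cross : Integrable (fun x ↦ ‖u‖ * ‖g x‖ + inner ℝ u (g x)) μ := h_norm_mul.add h_inner
  simp only [norm_defect_mul_eq]
  rw [integral_sub (h_defect.const_mul _) (h_cross.const_mul _), integral_const_mul,
    integral_const_mul, integral_sub h_norm_add h_norm_sub,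
    integral_add (integrable_const _) hg.norm, integral_add h_norm_mul h_inner,
    integral_const_mul, integral_const, integral_inner hg, smul_eq_mul]

theorem hlawka_integral_two_functions_general (hg : Integrable g μ) {a : ℝ} (ha : 0 < a) {u : H}
    (h_prop : ∫ x, g x ∂μ = ((∫ x, ‖g x‖ ∂μ) / a) • u)
    (h_ctrl : ∀ᵐ x ∂μ, ¬ SameRay ℝ (g x) (-u) → ‖g x‖ + ‖g x - u‖ ≤ a) :
    ∫ x, ‖g x - u‖ ∂μ ≤
      (μ.real Set.univ - 2 * (∫ x, ‖g x‖ ∂μ) / a) * ‖u‖ + ∫ x, ‖g x‖ ∂μ := by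
  have h_nonneg : 0 ≤ ∫ x, (‖u‖ + ‖g x‖ - ‖g x - u‖) * (a - ‖g x‖ - ‖g x - u‖) ∂μ :=
    integral_nonneg_of_ae (h_ctrl.mono fun _ ↦ norm_defect_mul_nonneg)
  have h_factor : ∫ x, (‖u‖ + ‖g x‖ - ‖g x - u‖) * (a - ‖g x‖ - ‖g x - u‖) ∂μ =
      (a + ‖u‖) * ((μ.real Set.univ - 2 * (∫ x, ‖g x‖ ∂μ) / a) * ‖u‖ + ∫ x, ‖g x‖ ∂μ -
        ∫ x, ‖g x - u‖ ∂μ) := by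
    rw [integral_norm_defect_mul hg, h_prop, inner_smul_right, real_inner_self_eq_norm_sq]
    field_simp
    ring
  rw [h_factor] at h_nonneg
  exact sub_nonneg.mp (nonneg_of_mul_nonneg_right h_nonneg (by positivity))

end Integral

theorem hlawka_integral_two_functions {Ω H : Type*} [MeasurableSpace Ω]
    (μ : Measure Ω) [IsFiniteMeasure μ]
    [NormedAddCommGroup H] [InnerProductSpace ℝ H] [CompleteSpace H]
    (f g : Ω → H) (hf : Integrable f μ) (hg : Integrable g μ)
    (hnf : (∫ ω, ‖f ω‖ ∂μ) ≠ 0) (hng : (∫ ω, ‖g ω‖ ∂μ) ≠ 0)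
    (hratio : (∫ ω, ‖f ω‖ ∂μ)⁻¹ • (∫ ω, f ω ∂μ)
      = (∫ ω, ‖g ω‖ ∂μ)⁻¹ • (∫ ω, g ω ∂μ))
    (hctrl : ∀ x : Ω, (¬ ∃ α : ℝ, 0 ≤ α ∧ -g x = α • (∫ ω, f ω ∂μ)) →
      ‖g x‖ + ‖g x - ∫ ω, f ω ∂μ‖ ≤ ∫ ω, ‖f ω‖ ∂μ) :
    ((μ Set.univ).toReal - 2 * (∫ ω, ‖g ω‖ ∂μ) / (∫ ω, ‖f ω‖ ∂μ))
        * ‖∫ ω, f ω ∂μ‖ + ∫ ω, ‖g ω‖ ∂μ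
      ≥ ∫ ω, ‖g ω - ∫ ω', f ω' ∂μ‖ ∂μ := by
  refine hlawka_integral_two_functions_general hg
    ((integral_nonneg fun _ ↦ norm_nonneg _).lt_of_ne' hnf)
    (by rw [div_eq_mul_inv, mul_smul, hratio, smul_inv_smul₀ hng])
    (.of_forall fun x h_ray ↦ hctrl x fun ⟨α, hα, hgx⟩ ↦ h_ray ?_)
  rw [← sameRay_neg_iff, neg_neg, hgx]
  exact .sameRay_nonneg_smul_left _ hα
end

section
/- Let (Ω, μ) be a finite measure space, let H be a real Hilbert space, let f : Ω → H be Bochner integrable, and let t ≥ 0. Assume that for every x ∈ Ω such that there is no α ≥ 0 with −f(x) = α·∫_Ω f dμ, one has ∫_Ω ‖f‖ dμ ≥ t·‖f(x)‖ + ‖t·f(x) − ∫_Ω f dμ‖, and assume ∫_Ω ‖f‖ dμ ≠ 0. Then (μ(Ω) − 2t)·‖∫_Ω f dμ‖ + t·∫_Ω ‖f‖ dμ ≥ ∫_Ω ‖t·f(ω) − ∫_Ω f dμ‖ dμ(ω). -/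
open MeasureTheory

/-!
For vectors `u`, `v` of an inner product space, the defect `‖u‖ + ‖v‖ - ‖u - v‖` of the triangle
inequality times the perimeter `‖u‖ + ‖v‖ + ‖u - v‖` equals `2 * (‖u‖ * ‖v‖ + ⟪u, v⟫)`. For fixed
`v` this product is linear in the pair `(‖u‖, u)`, so its integral is explicit. Take `u = t • f ω`
and `v = ∫ f`: by assumption the perimeter is at most `∫ ‖f‖ + ‖∫ f‖`, unless `u` and `v` point in
opposite directions, in which case the product vanishes. Replacing the perimeter by this constant
and integrating bounds the integral of the defect from below.
-/

section InnerProductSpace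

variable {H : Type*} [NormedAddCommGroup H] [InnerProductSpace ℝ H]

theorem triangle_defect_mul_perimeter (u v : H) :
    (‖u‖ + ‖v‖ - ‖u - v‖) * (‖u‖ + ‖v‖ + ‖u - v‖) = 2 * (‖u‖ * ‖v‖ + inner ℝ u v) := by
  linear_combination -norm_sub_sq_real u v

theorem norm_mul_norm_add_inner_eq_zero_of_sameRay_neg {u v : H} (h : SameRay ℝ (-u) v) :
    ‖u‖ * ‖v‖ + inner ℝ u v = 0 := by
  have h_inner : inner ℝ (-u) v = ‖-u‖ * ‖v‖ :=
    inner_eq_norm_mul_iff_real.2 h.norm_smul_eq.symm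
  rw [inner_neg_left, norm_neg] at h_inner
  linarith

theorem le_triangle_defect_mul_of_perimeter_le {u v : H} {P : ℝ} (hP : 0 ≤ P)
    (h : ¬ SameRay ℝ (-u) v → ‖u‖ + ‖v‖ + ‖u - v‖ ≤ P) :
    2 * (‖u‖ * ‖v‖ + inner ℝ u v) ≤ (‖u‖ + ‖v‖ - ‖u - v‖) * P := by
  have h_defect : 0 ≤ ‖u‖ + ‖v‖ - ‖u - v‖ := sub_nonneg.2 (norm_sub_le u v)
  by_cases h_ray : SameRay ℝ (-u) v
  · rw [norm_mul_norm_add_inner_eq_zero_of_sameRay_neg h_ray, mul_zero]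
    exact mul_nonneg h_defect hP
  · rw [← triangle_defect_mul_perimeter]
    exact mul_le_mul_of_nonneg_left (h h_ray) h_defect

end InnerProductSpace

section Integral

variable {Ω H : Type*} [MeasurableSpace Ω] {μ : Measure Ω} [NormedAddCommGroup H] {g : Ω → H}

theorem integral_triangle_defect [IsFiniteMeasure μ] (hg : Integrable g μ) (v : H) :
    ∫ ω, (‖g ω‖ + ‖v‖ - ‖g ω - v‖) ∂μ
      = ∫ ω, ‖g ω‖ ∂μ + μ.real Set.univ * ‖v‖ - ∫ ω, ‖g ω - v‖ ∂μ := by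
  have h_sum : Integrable (fun ω => ‖g ω‖ + ‖v‖) μ := hg.norm.add (integrable_const _)
  have h_sub : Integrable (fun ω => ‖g ω - v‖) μ := (hg.sub (integrable_const v)).norm
  rw [integral_sub h_sum h_sub, integral_add hg.norm (integrable_const _), integral_const,
    smul_eq_mul]

variable [InnerProductSpace ℝ H] [CompleteSpace H]

theorem integral_norm_mul_norm_add_inner (hg : Integrable g μ) (v : H) :
    ∫ ω, (‖g ω‖ * ‖v‖ + inner ℝ (g ω) v) ∂μ
      = (∫ ω, ‖g ω‖ ∂μ) * ‖v‖ + inner ℝ (∫ ω, g ω ∂μ) v := by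
  simp_rw [real_inner_comm v]
  rw [integral_add (hg.norm.mul_const _) (hg.const_inner v), integral_mul_const, integral_inner hg]

theorem le_integral_triangle_defect_mul_of_perimeter_le [IsFiniteMeasure μ]
    (hg : Integrable g μ) {v : H} {P : ℝ} (hP : 0 ≤ P)
    (h : ∀ᵐ ω ∂μ, ¬ SameRay ℝ (-g ω) v → ‖g ω‖ + ‖v‖ + ‖g ω - v‖ ≤ P) :
    2 * ((∫ ω, ‖g ω‖ ∂μ) * ‖v‖ + inner ℝ (∫ ω, g ω ∂μ) v)
      ≤ (∫ ω, ‖g ω‖ ∂μ + μ.real Set.univ * ‖v‖ - ∫ ω, ‖g ω - v‖ ∂μ) * P := by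
  rw [← integral_norm_mul_norm_add_inner hg, ← integral_triangle_defect hg,
    ← integral_const_mul, ← integral_mul_const]
  refine integral_mono_ae ?_ ?_ (h.mono fun ω => le_triangle_defect_mul_of_perimeter_le hP)
  · exact ((hg.norm.mul_const _).add (hg.inner_const v)).const_mul 2
  · exact ((hg.norm.add (integrable_const _)).sub (hg.sub (integrable_const v)).norm).mul_const P

theorem hlawka_integral_scaled_general [IsFiniteMeasure μ] {f : Ω → H} (hf : Integrable f μ)
    {t : ℝ} (ht : 0 ≤ t)
    (hctrl : ∀ᵐ ω ∂μ, ¬ SameRay ℝ (-f ω) (∫ ω', f ω' ∂μ) →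
      t * ‖f ω‖ + ‖t • f ω - ∫ ω', f ω' ∂μ‖ ≤ ∫ ω', ‖f ω'‖ ∂μ) :
    ∫ ω, ‖t • f ω - ∫ ω', f ω' ∂μ‖ ∂μ
      ≤ (μ.real Set.univ - 2 * t) * ‖∫ ω, f ω ∂μ‖ + t * ∫ ω, ‖f ω‖ ∂μ := by
  set S := ∫ ω, f ω ∂μ
  set N := ∫ ω, ‖f ω‖ ∂μ
  have h_norm (ω : Ω) : ‖t • f ω‖ = t * ‖f ω‖ := norm_smul_of_nonneg ht _
  have h_int_norm : ∫ ω, ‖t • f ω‖ ∂μ = t * N := by simp_rw [h_norm, integral_const_mul, N]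
  have h_inner : inner ℝ (∫ ω, t • f ω ∂μ) S = t * ‖S‖ ^ 2 := by
    rw [integral_smul, real_inner_smul_left, real_inner_self_eq_norm_sq]
  obtain hS | hS := eq_or_ne S 0
  · simp [hS, h_int_norm]
  have hP : 0 < N + ‖S‖ :=
    add_pos_of_nonneg_of_pos (integral_nonneg fun _ => norm_nonneg _) (norm_pos_iff.2 hS)
  have h_perimeter : ∀ᵐ ω ∂μ, ¬ SameRay ℝ (-(t • f ω)) S →
      ‖t • f ω‖ + ‖S‖ + ‖t • f ω - S‖ ≤ N + ‖S‖ := by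
    filter_upwards [hctrl] with ω hω h_ray
    rw [← smul_neg] at h_ray
    linarith [hω fun h => h_ray (h.nonneg_smul_left ht), h_norm ω]
  have h_le := le_integral_triangle_defect_mul_of_perimeter_le (hf.smul t) hP.le h_perimeter
  simp only [Pi.smul_apply, h_int_norm, h_inner] at h_le
  have h_cancel : 2 * t * ‖S‖ ≤ t * N + μ.real Set.univ * ‖S‖ - ∫ ω, ‖t • f ω - S‖ ∂μ :=
    le_of_mul_le_mul_right (by linarith) hP
  linarith

end Integral

theorem hlawka_integral_scaled {Ω H : Type*} [MeasurableSpace Ω]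
    (μ : Measure Ω) [IsFiniteMeasure μ]
    [NormedAddCommGroup H] [InnerProductSpace ℝ H] [CompleteSpace H]
    (f : Ω → H) (hf : Integrable f μ) (t : ℝ) (ht : 0 ≤ t)
    (hnf : (∫ ω, ‖f ω‖ ∂μ) ≠ 0)
    (hctrl : ∀ x : Ω, (¬ ∃ α : ℝ, 0 ≤ α ∧ -f x = α • (∫ ω, f ω ∂μ)) →
      t * ‖f x‖ + ‖t • f x - ∫ ω, f ω ∂μ‖ ≤ ∫ ω, ‖f ω‖ ∂μ) :
    ((μ Set.univ).toReal - 2 * t) * ‖∫ ω, f ω ∂μ‖ + t * ∫ ω, ‖f ω‖ ∂μ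
      ≥ ∫ ω, ‖t • f ω - ∫ ω', f ω' ∂μ‖ ∂μ :=
  hlawka_integral_scaled_general hf ht <| ae_of_all μ fun x h_ray =>
    hctrl x fun ⟨_, hα, h⟩ => h_ray (h ▸ SameRay.sameRay_nonneg_smul_left _ hα)
end

section
/- Let H be a real inner product space with induced norm ‖·‖. Then for every λ ∈ [0, 1] and all x, y, z ∈ H: (1 − λ)·(‖x‖ + ‖y‖ + ‖z‖) + (1 + 2λ)·‖x + y + z‖ ≥ ‖λx + y + z‖ + ‖x + λy + z‖ + ‖x + y + λz‖. -/
/-!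
Writing `s = x + y + z`, each vector on the left is a convex combination such as
`lam • x + y + z = lam • s + (1 - lam) • (y + z)`, so convexity of the norm reduces the claim to
`1 - lam` times Hlawka's inequality, the case `lam = 0`. For that case, the norms of `x, y, z, s`
and the norms of the pairwise sums have equal sums of squares, and this turns
`(‖x‖ + ‖y‖ + ‖z‖ + ‖s‖)` times the difference of the two sides into a sum of three products of
triangle-inequality defects.
-/

section Seminormed

variable {E : Type*} [SeminormedAddCommGroup E]

theorem mul_triangle_defects_nonneg (u v w : E) :
    0 ≤ (‖u‖ + ‖v‖ - ‖u + v‖) * (‖w‖ + ‖u + v + w‖ - ‖u + v‖) := by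
  have h_pair : ‖u + v‖ ≤ ‖u‖ + ‖v‖ := norm_add_le u v
  have h_total : ‖u + v‖ ≤ ‖u + v + w‖ + ‖w‖ := norm_le_add_norm_add (u + v) w
  exact mul_nonneg (by linarith) (by linarith)

theorem norm_smul_add_le_of_mem_Icc [NormedSpace ℝ E] {t : ℝ} (ht : t ∈ Set.Icc (0 : ℝ) 1)
    (u v : E) : ‖t • u + v‖ ≤ t * ‖u + v‖ + (1 - t) * ‖v‖ := by
  have h_comb : t • u + v = t • (u + v) + (1 - t) • v := by module
  rw [h_comb]
  exact convexOn_univ_norm.2 (Set.mem_univ (u + v)) (Set.mem_univ v) ht.1 (sub_nonneg.2 ht.2)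
    (add_sub_cancel t 1)

end Seminormed

theorem norm_sq_pairwise_add_eq (𝕜 : Type*) {H : Type*} [RCLike 𝕜] [SeminormedAddCommGroup H]
    [InnerProductSpace 𝕜 H] (x y z : H) :
    ‖y + z‖ ^ 2 + ‖x + z‖ ^ 2 + ‖x + y‖ ^ 2
      = ‖x‖ ^ 2 + ‖y‖ ^ 2 + ‖z‖ ^ 2 + ‖x + y + z‖ ^ 2 := by
  rw [norm_add_sq (𝕜 := 𝕜) (x + y) z, norm_add_sq (𝕜 := 𝕜) x y, norm_add_sq (𝕜 := 𝕜) y z,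
    norm_add_sq (𝕜 := 𝕜) x z, inner_add_left, map_add]
  ring

theorem hlawka_identity (𝕜 : Type*) {H : Type*} [RCLike 𝕜] [SeminormedAddCommGroup H]
    [InnerProductSpace 𝕜 H] (x y z : H) :
    (‖x‖ + ‖y‖ + ‖z‖ + ‖x + y + z‖)
        * (‖x‖ + ‖y‖ + ‖z‖ + ‖x + y + z‖ - (‖y + z‖ + ‖x + z‖ + ‖x + y‖))
      = (‖y‖ + ‖z‖ - ‖y + z‖) * (‖x‖ + ‖x + y + z‖ - ‖y + z‖)
        + (‖x‖ + ‖z‖ - ‖x + z‖) * (‖y‖ + ‖x + y + z‖ - ‖x + z‖)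
        + (‖x‖ + ‖y‖ - ‖x + y‖) * (‖z‖ + ‖x + y + z‖ - ‖x + y‖) := by
  linear_combination -norm_sq_pairwise_add_eq 𝕜 x y z

theorem hlawka_inequality (𝕜 : Type*) {H : Type*} [RCLike 𝕜] [SeminormedAddCommGroup H]
    [InnerProductSpace 𝕜 H] (x y z : H) :
    ‖y + z‖ + ‖x + z‖ + ‖x + y‖ ≤ ‖x‖ + ‖y‖ + ‖z‖ + ‖x + y + z‖ := by
  have h_total_nonneg : 0 ≤ ‖x‖ + ‖y‖ + ‖z‖ + ‖x + y + z‖ := by positivity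
  rcases h_total_nonneg.eq_or_lt with h_zero | h_pos
  · linarith [norm_add_le y z, norm_add_le x z, norm_add_le x y, norm_nonneg (x + y + z)]
  · have h_yz := mul_triangle_defects_nonneg y z x
    have h_xz := mul_triangle_defects_nonneg x z y
    have h_xy := mul_triangle_defects_nonneg x y z
    rw [show y + z + x = x + y + z by abel] at h_yz
    rw [add_right_comm x z y] at h_xz
    refine sub_nonneg.1 (nonneg_of_mul_nonneg_right ?_ h_pos)
    rw [hlawka_identity 𝕜]
    exact add_nonneg (add_nonneg h_yz h_xz) h_xy

theorem hlawka_lambda_general (𝕜 : Type*) {H : Type*} [RCLike 𝕜] [SeminormedAddCommGroup H]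
    [InnerProductSpace 𝕜 H] [NormedSpace ℝ H] {lam : ℝ}
    (hlam : lam ∈ Set.Icc (0 : ℝ) 1) (x y z : H) :
    ‖lam • x + y + z‖ + ‖x + lam • y + z‖ + ‖x + y + lam • z‖
      ≤ (1 - lam) * (‖x‖ + ‖y‖ + ‖z‖) + (1 + 2 * lam) * ‖x + y + z‖ := by
  have hx : ‖lam • x + y + z‖ ≤ lam * ‖x + y + z‖ + (1 - lam) * ‖y + z‖ := by
    simpa only [add_assoc] using norm_smul_add_le_of_mem_Icc hlam x (y + z)
  have hy : ‖x + lam • y + z‖ ≤ lam * ‖x + y + z‖ + (1 - lam) * ‖x + z‖ := by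
    simpa only [add_assoc, add_left_comm y x z, add_left_comm (lam • y) x z]
      using norm_smul_add_le_of_mem_Icc hlam y (x + z)
  have hz : ‖x + y + lam • z‖ ≤ lam * ‖x + y + z‖ + (1 - lam) * ‖x + y‖ := by
    simpa only [add_comm (x + y)] using norm_smul_add_le_of_mem_Icc hlam z (x + y)
  calc ‖lam • x + y + z‖ + ‖x + lam • y + z‖ + ‖x + y + lam • z‖
      ≤ 3 * lam * ‖x + y + z‖ + (1 - lam) * (‖y + z‖ + ‖x + z‖ + ‖x + y‖) := by linarith
    _ ≤ 3 * lam * ‖x + y + z‖ + (1 - lam) * (‖x‖ + ‖y‖ + ‖z‖ + ‖x + y + z‖) := by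
      have h_coeff_nonneg : 0 ≤ 1 - lam := sub_nonneg.2 hlam.2
      have h_hlawka := hlawka_inequality 𝕜 x y z
      gcongr (_ + _ * ?_)
    _ = (1 - lam) * (‖x‖ + ‖y‖ + ‖z‖) + (1 + 2 * lam) * ‖x + y + z‖ := by ring

theorem hlawka_lambda {H : Type*} [NormedAddCommGroup H] [InnerProductSpace ℝ H]
    (lam : ℝ) (hlam : lam ∈ Set.Icc (0 : ℝ) 1) (x y z : H) :
    ‖lam • x + y + z‖ + ‖x + lam • y + z‖ + ‖x + y + lam • z‖
      ≤ (1 - lam) * (‖x‖ + ‖y‖ + ‖z‖) + (1 + 2 * lam) * ‖x + y + z‖ :=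
  hlawka_lambda_general ℝ hlam x y z
end
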